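/- arXiv:0708.1922 — 11 statements merged into one kernel-verified Lean document; each statement's English description precedes it below -/
import Mathlib

section
/- For any A_0, B_0, C_0 > 0, the functions A(t) = A_0 (1 + 7 R_0^2 t)^{-1/14}, B(t) = B_0 (1 + 7 R_0^2 t)^{3/14}, C(t) = C_0 (1 + 7 R_0^2 t)^{3/14}, where R_0 = -2 A_0/(B_0 C_0), are defined and positive for all t ≥ 0, satisfy A(0) = A_0, B(0) = B_0, C(0) = C_0, and solve the Heisenberg negative cross curvature flow ODE system on [0, ∞). -/
/-!
Put `u = 1 + 7 R0² t` and `s = u ^ (1/14)`, so that `u = s ^ 14`, `A = A0 / s`, `B = B0 s³` and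
`C = C0 s³`. A function `K u ^ p` has derivative `7 p R0² K u ^ p / u`
(`hasDerivAt_mul_rpow_affine`), and after substituting `R0² = 4 A0² / (B0² C0²)` each equation of
the system becomes an identity between rational functions of `s`, `A0`, `B0`, `C0`.
-/

/-- The derivative of a power of an affine function, with `u ^ (p - 1)` written as `u ^ p / u` so
that only the exponent `p` occurs. -/
lemma hasDerivAt_mul_rpow_affine (K k p t : ℝ) (hu : 0 < 1 + k * t) :
    HasDerivAt (fun t : ℝ => K * (1 + k * t) ^ p)
      (K * (k * p * ((1 + k * t) ^ p / (1 + k * t)))) t := by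
  have h1 : HasDerivAt (fun t : ℝ => 1 + k * t) k t := by
    simpa using ((hasDerivAt_id t).const_mul k).const_add 1
  have h2 := (h1.rpow_const (p := p) (Or.inl hu.ne')).const_mul K
  rwa [Real.rpow_sub_one hu.ne'] at h2

/-- The explicit solution of the negative cross curvature flow ODE system on the
Heisenberg group: for any initial data `A0, B0, C0 > 0`, the functions
`A(t) = A0 (1 + 7 R0² t)^{-1/14}`, `B(t) = B0 (1 + 7 R0² t)^{3/14}`,
`C(t) = C0 (1 + 7 R0² t)^{3/14}` with `R0 = -2 A0/(B0 C0)` are positive for all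
`t ≥ 0`, take the prescribed initial values, and solve
`A' = -2A³/(B²C²)`, `B' = 6A²/(BC²)`, `C' = 6A²/(B²C)` on `[0, ∞)`. -/
theorem heisenberg_explicit_solution
    (A0 B0 C0 : ℝ) (hA0 : 0 < A0) (hB0 : 0 < B0) (hC0 : 0 < C0)
    (R0 : ℝ) (hR0 : R0 = -2 * A0 / (B0 * C0))
    (A B C : ℝ → ℝ)
    (hA : A = fun t : ℝ => A0 * (1 + 7 * R0 ^ 2 * t) ^ (-(1 : ℝ) / 14))
    (hB : B = fun t : ℝ => B0 * (1 + 7 * R0 ^ 2 * t) ^ ((3 : ℝ) / 14))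
    (hC : C = fun t : ℝ => C0 * (1 + 7 * R0 ^ 2 * t) ^ ((3 : ℝ) / 14)) :
    A 0 = A0 ∧ B 0 = B0 ∧ C 0 = C0 ∧
    ∀ t : ℝ, 0 ≤ t →
      (0 < A t ∧ 0 < B t ∧ 0 < C t) ∧
      HasDerivAt A (-2 * A t ^ 3 / (B t ^ 2 * C t ^ 2)) t ∧
      HasDerivAt B (6 * A t ^ 2 / (B t * C t ^ 2)) t ∧
      HasDerivAt C (6 * A t ^ 2 / (B t ^ 2 * C t)) t := by
  have hA0' := hA0.ne'
  have hB0' := hB0.ne'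
  have hC0' := hC0.ne'
  refine ⟨by simp [hA], by simp [hB], by simp [hC], fun t ht => ?_⟩
  have hu : 0 < 1 + 7 * R0 ^ 2 * t := by positivity
  have dA := hasDerivAt_mul_rpow_affine A0 (7 * R0 ^ 2) (-(1 : ℝ) / 14) t hu
  have dB := hasDerivAt_mul_rpow_affine B0 (7 * R0 ^ 2) ((3 : ℝ) / 14) t hu
  have dC := hasDerivAt_mul_rpow_affine C0 (7 * R0 ^ 2) ((3 : ℝ) / 14) t hu
  rw [← hA] at dA
  rw [← hB] at dB
  rw [← hC] at dC
  have eA : A t = A0 * (1 + 7 * R0 ^ 2 * t) ^ (-(1 : ℝ) / 14) := by rw [hA]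
  have eB : B t = B0 * (1 + 7 * R0 ^ 2 * t) ^ ((3 : ℝ) / 14) := by rw [hB]
  have eC : C t = C0 * (1 + 7 * R0 ^ 2 * t) ^ ((3 : ℝ) / 14) := by rw [hC]
  rw [eA, eB, eC]
  have hR : R0 ^ 2 = 4 * A0 ^ 2 / (B0 ^ 2 * C0 ^ 2) := by
    rw [hR0]; field_simp; norm_num
  generalize 1 + 7 * R0 ^ 2 * t = u at *
  obtain ⟨s, hs, rfl⟩ : ∃ s : ℝ, 0 < s ∧ s ^ 14 = u :=
    ⟨u ^ ((1 : ℝ) / 14), by positivity, by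
      rw [← Real.rpow_natCast, ← Real.rpow_mul hu.le]; norm_num⟩
  have e1 : (s ^ 14) ^ (-(1 : ℝ) / 14) = s⁻¹ := by
    rw [← Real.rpow_natCast, ← Real.rpow_mul hs.le, ← Real.rpow_neg_one]; norm_num
  have e3 : (s ^ 14) ^ ((3 : ℝ) / 14) = s ^ 3 := by
    rw [← Real.rpow_natCast, ← Real.rpow_mul hs.le, ← Real.rpow_natCast]; norm_num
  rw [e1, hR] at dA
  rw [e3, hR] at dB dC
  rw [e1, e3]
  have hs' := hs.ne'
  refine ⟨⟨by positivity, by positivity, by positivity⟩, ?_, ?_, ?_⟩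
  · convert dA using 1
    field_simp
    norm_num
  · convert dB using 1
    field_simp
    norm_num
  · convert dC using 1
    field_simp
    norm_num
end

section
/- Let A, B, C be positive differentiable functions on an interval [0, T) solving the Heisenberg negative cross curvature flow ODE system with initial values A_0, B_0, C_0 > 0. Then the quantities B/C, A^3 B and A^3 C are constant along the flow: for all t in [0, T), B(t)/C(t) = B_0/C_0, A(t)^3 B(t) = A_0^3 B_0 and A(t)^3 C(t) = A_0^3 C_0. -/
/-! Each of `B/C`, `A³B` and `A³C` has zero derivative on `[0, T)`, because the logarithmic
derivatives satisfy `B'/B = C'/C = -3 A'/A = 6A²/(B²C²)`. A function with zero derivative on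
`[0, T)` is constant there by the mean value inequality. -/

lemma eq_of_hasDerivAt_zero_Ico {T : ℝ} {f : ℝ → ℝ}
    (hf : ∀ t ∈ Set.Ico (0 : ℝ) T, HasDerivAt f 0 t) {t : ℝ} (ht : t ∈ Set.Ico (0 : ℝ) T) :
    f t = f 0 := by
  refine constant_of_has_deriv_right_zero (a := 0) (b := t) (fun x hx => ?_) (fun x hx => ?_) t
    ⟨ht.1, le_rfl⟩
  · exact (hf x ⟨hx.1, hx.2.trans_lt ht.2⟩).continuousAt.continuousWithinAt
  · exact (hf x ⟨hx.1, hx.2.trans ht.2⟩).hasDerivWithinAt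

/-- Along any positive solution of the negative cross curvature flow ODE system on the
Heisenberg group (`A' = -2A³/(B²C²)`, `B' = 6A²/(BC²)`, `C' = 6A²/(B²C)`) on `[0, T)`,
the quantities `B/C`, `A³B` and `A³C` are conserved. -/
theorem heisenberg_conserved_quantities
    (T A0 B0 C0 : ℝ) (hT : 0 < T)
    (hA0 : 0 < A0) (hB0 : 0 < B0) (hC0 : 0 < C0)
    (A B C : ℝ → ℝ)
    (hinitA : A 0 = A0) (hinitB : B 0 = B0) (hinitC : C 0 = C0)
    (hsol : ∀ t ∈ Set.Ico (0 : ℝ) T,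
      (0 < A t ∧ 0 < B t ∧ 0 < C t) ∧
      HasDerivAt A (-2 * A t ^ 3 / (B t ^ 2 * C t ^ 2)) t ∧
      HasDerivAt B (6 * A t ^ 2 / (B t * C t ^ 2)) t ∧
      HasDerivAt C (6 * A t ^ 2 / (B t ^ 2 * C t)) t) :
    ∀ t ∈ Set.Ico (0 : ℝ) T,
      B t / C t = B0 / C0 ∧
      A t ^ 3 * B t = A0 ^ 3 * B0 ∧
      A t ^ 3 * C t = A0 ^ 3 * C0 := by
  intro t ht
  subst hinitA hinitB hinitC
  refine ⟨?_, ?_, ?_⟩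
  · refine eq_of_hasDerivAt_zero_Ico (f := fun s => B s / C s) (fun s hs => ?_) ht
    obtain ⟨⟨hA, hB, hC⟩, dA, dB, dC⟩ := hsol s hs
    refine (dB.fun_div dC hC.ne').congr_deriv ?_
    field_simp
    ring
  · refine eq_of_hasDerivAt_zero_Ico (f := fun s => A s ^ 3 * B s) (fun s hs => ?_) ht
    obtain ⟨⟨hA, hB, hC⟩, dA, dB, dC⟩ := hsol s hs
    refine ((dA.fun_pow 3).fun_mul dB).congr_deriv ?_
    field_simp
    ring
  · refine eq_of_hasDerivAt_zero_Ico (f := fun s => A s ^ 3 * C s) (fun s hs => ?_) ht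
    obtain ⟨⟨hA, hB, hC⟩, dA, dB, dC⟩ := hsol s hs
    refine ((dA.fun_pow 3).fun_mul dC).congr_deriv ?_
    field_simp
    ring
end

section
/- For initial data with A_0 = C_0 > 0 and B_0 > 0, the functions B(t) = sqrt(B_0^2 - 64 t) and A(t) = C(t) = A_0 B_0 / sqrt(B_0^2 - 64 t) are defined and positive on [0, B_0^2/64), take the given initial values at t = 0, and solve the E(1,1) negative cross curvature flow ODE system on [0, B_0^2/64). -/
/-!
Along `A = C` the system collapses to `A' = 32 A / B ^ 2` and `B' = -32 / B`. The second equation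
says `(B ^ 2)' = -64`, which `B = √(B0 ^ 2 - 64 t)` satisfies, and then `A B` is conserved, which
gives `A = A0 B0 / B`. The proof differentiates these formulas where `B0 ^ 2 - 64 t > 0` and compares
the derivatives with the right-hand sides by clearing denominators.
-/

/-- For initial data with `A0 = C0 > 0` and `B0 > 0`, the functions
`B(t) = √(B0² - 64t)` and `A(t) = C(t) = A0 B0/√(B0² - 64t)` are positive on
`[0, B0²/64)`, take the given initial values, and solve the `E(1,1)` negative
cross curvature flow ODE system there. -/
theorem sol_E11_symmetric_solution
    (A0 B0 : ℝ) (hA0 : 0 < A0) (hB0 : 0 < B0)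
    (A B C : ℝ → ℝ)
    (hB : B = fun t : ℝ => Real.sqrt (B0 ^ 2 - 64 * t))
    (hA : A = fun t : ℝ => A0 * B0 / Real.sqrt (B0 ^ 2 - 64 * t))
    (hC : C = A) :
    A 0 = A0 ∧ B 0 = B0 ∧ C 0 = A0 ∧
    ∀ t ∈ Set.Ico (0 : ℝ) (B0 ^ 2 / 64),
      (0 < A t ∧ 0 < B t ∧ 0 < C t) ∧
      HasDerivAt A
        (2 * A t * (A t + C t) ^ 3 * (3 * C t - A t) / (A t * B t * C t) ^ 2) t ∧
      HasDerivAt B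
        (-2 * B t * (3 * A t - C t) * (3 * C t - A t) * (A t + C t) ^ 2 /
          (A t * B t * C t) ^ 2) t ∧
      HasDerivAt C
        (2 * C t * (A t + C t) ^ 3 * (3 * A t - C t) / (A t * B t * C t) ^ 2) t := by
  subst hC hA hB
  have hs0 : Real.sqrt (B0 ^ 2 - 64 * 0) = B0 := by
    rw [mul_zero, sub_zero, Real.sqrt_sq hB0.le]
  have hA00 : A0 * B0 / Real.sqrt (B0 ^ 2 - 64 * 0) = A0 := by
    rw [hs0]; field_simp
  refine ⟨hA00, hs0, hA00, ?_⟩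
  rintro t ⟨-, ht⟩
  have hpos : 0 < B0 ^ 2 - 64 * t := by linarith
  have hs : 0 < Real.sqrt (B0 ^ 2 - 64 * t) := Real.sqrt_pos.mpr hpos
  have hlin : HasDerivAt (fun t : ℝ => B0 ^ 2 - 64 * t) (-64) t := by
    simpa using ((hasDerivAt_id t).const_mul 64).const_sub (B0 ^ 2)
  have hdB := hlin.sqrt hpos.ne'
  have hdA := (hasDerivAt_const t (A0 * B0)).div hdB hs.ne'
  beta_reduce
  -- The square root enters the remaining identities only as a positive number `s`.
  generalize Real.sqrt (B0 ^ 2 - 64 * t) = s at hs hdA hdB ⊢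
  have hA' : 0 < A0 * B0 / s := by positivity
  have hdA' : HasDerivAt (fun t : ℝ => A0 * B0 / Real.sqrt (B0 ^ 2 - 64 * t))
      (2 * (A0 * B0 / s) * (A0 * B0 / s + A0 * B0 / s) ^ 3 *
        (3 * (A0 * B0 / s) - A0 * B0 / s) / (A0 * B0 / s * s * (A0 * B0 / s)) ^ 2) t := by
    refine HasDerivAt.congr_deriv hdA ?_
    field_simp
    ring
  refine ⟨⟨hA', hs, hA'⟩, hdA', ?_, hdA'⟩
  refine hdB.congr_deriv ?_
  field_simp
  ring
end

section
/- Let A, B, C be positive differentiable functions on an interval [0, T) solving the E(1,1) negative cross curvature flow ODE system with A_0 > C_0 > 0. Then for all t in [0, T): A(t) > C(t), and the functions A - C, A/C and A - 3C are (weakly) decreasing on [0, T); moreover d(A-C)/dt = -2 (A+C)^4 (A-C)/(ABC)^2 and d(ln(A/C))/dt = -8 (A+C)^3 (A-C)/(ABC)^2. -/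
/-!
With `D = (A B C)²`, the flow equations give the two exact formulas for the derivatives of `A - C`
and `log (A / C)` by algebra, so everything rests on `A > C`. The first formula is a linear equation
`u' = -k u` for `u = A - C`, with `k = 2 (A + C)⁴ / D` continuous on `[0, T)`. If `k ≤ K` on
`[0, s]`, then `u² exp (2 K t)` is nondecreasing there, so `u` never vanishes
(`ne_zero_of_linear_ode`) and by the intermediate value theorem stays positive
(`pos_of_linear_ode`). Given `A > C`, the derivatives of `A - C`, `log (A / C)` and `A - 3 C` are
all nonpositive; for the last one,
`A (3 C - A) - 3 C (3 A - C) = -(A² + 6 A C - 3 C²) < 0`.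
-/

lemma antitoneOn_Ico_of_hasDerivAt_nonpos {f f' : ℝ → ℝ} {a b : ℝ}
    (hf : ∀ t ∈ Set.Ico a b, HasDerivAt f (f' t) t) (hf' : ∀ t ∈ Set.Ico a b, f' t ≤ 0) :
    AntitoneOn f (Set.Ico a b) := by
  refine antitoneOn_of_deriv_nonpos (convex_Ico a b)
    (fun t ht => (hf t ht).continuousAt.continuousWithinAt)
    (fun t ht => (hf t (interior_subset ht)).differentiableAt.differentiableWithinAt)
    (fun t ht => ?_)
  rw [(hf t (interior_subset ht)).deriv]
  exact hf' t (interior_subset ht)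

/-- Working with `u ^ 2` rather than `u` makes the monotone integrating factor argument independent
of the sign of `u`. -/
lemma ne_zero_of_linear_ode {u k : ℝ → ℝ} {s : ℝ} (hs : 0 ≤ s)
    (hk : ContinuousOn k (Set.Icc 0 s))
    (hu : ∀ t ∈ Set.Icc 0 s, HasDerivAt u (-(k t) * u t) t) (h0 : 0 < u 0) : u s ≠ 0 := by
  obtain ⟨K, hK⟩ := isCompact_Icc.bddAbove_image hk
  have hkK : ∀ t ∈ Set.Icc 0 s, k t ≤ K := fun t ht => hK ⟨t, ht, rfl⟩
  have hder : ∀ t ∈ Set.Icc 0 s, HasDerivAt (fun t => u t ^ 2 * Real.exp (2 * K * t))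
      (2 * (K - k t) * u t ^ 2 * Real.exp (2 * K * t)) t := by
    intro t ht
    have hexp : HasDerivAt (fun t => Real.exp (2 * K * t)) (Real.exp (2 * K * t) * (2 * K)) t := by
      simpa using ((hasDerivAt_id t).const_mul (2 * K)).exp
    refine (((hu t ht).pow 2).mul hexp).congr_deriv ?_
    simp only [Pi.pow_apply]
    push_cast
    ring
  have hmono : MonotoneOn (fun t => u t ^ 2 * Real.exp (2 * K * t)) (Set.Icc 0 s) := by
    refine monotoneOn_of_deriv_nonneg (convex_Icc 0 s)
      (fun t ht => (hder t ht).continuousAt.continuousWithinAt)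
      (fun t ht => (hder t (interior_subset ht)).differentiableAt.differentiableWithinAt)
      (fun t ht => ?_)
    rw [(hder t (interior_subset ht)).deriv]
    have := sub_nonneg.2 (hkK t (interior_subset ht))
    positivity
  intro hzero
  have h := hmono (Set.left_mem_Icc.2 hs) (Set.right_mem_Icc.2 hs) hs
  simp only [hzero, mul_zero, Real.exp_zero, mul_one] at h
  have : 0 < u 0 ^ 2 := by positivity
  norm_num at h
  linarith

lemma pos_of_linear_ode {u k : ℝ → ℝ} {T : ℝ} (hk : ContinuousOn k (Set.Ico 0 T))
    (hu : ∀ t ∈ Set.Ico 0 T, HasDerivAt u (-(k t) * u t) t) (h0 : 0 < u 0) :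
    ∀ t ∈ Set.Ico 0 T, 0 < u t := by
  intro t ht
  by_contra! hneg
  have hcont : ContinuousOn u (Set.Icc 0 t) := fun x hx =>
    (hu x ⟨hx.1, hx.2.trans_lt ht.2⟩).continuousAt.continuousWithinAt
  obtain ⟨s, hs, hs0⟩ := intermediate_value_Icc' ht.1 hcont ⟨hneg, h0.le⟩
  have hsub : Set.Icc 0 s ⊆ Set.Ico 0 T := fun x hx =>
    ⟨hx.1, (hx.2.trans hs.2).trans_lt ht.2⟩
  exact ne_zero_of_linear_ode hs.1 (hk.mono hsub) (fun x hx => hu x (hsub hx)) h0 hs0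

/-- Along a positive solution of the `E(1,1)` negative cross curvature flow ODE system
on `[0, T)` with `A0 > C0 > 0`: one has `A > C`, the quantities `A - C`, `A/C`, `A - 3C`
are (weakly) decreasing, and the stated derivative formulas for `A - C` and `ln(A/C)`
hold. -/
theorem sol_E11_monotone_quantities
    (T A0 B0 C0 : ℝ) (hT : 0 < T)
    (hB0 : 0 < B0) (hC0 : 0 < C0) (hA0C0 : A0 > C0)
    (A B C : ℝ → ℝ)
    (hinitA : A 0 = A0) (hinitB : B 0 = B0) (hinitC : C 0 = C0)
    (hsol : ∀ t ∈ Set.Ico (0 : ℝ) T,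
      (0 < A t ∧ 0 < B t ∧ 0 < C t) ∧
      HasDerivAt A
        (2 * A t * (A t + C t) ^ 3 * (3 * C t - A t) / (A t * B t * C t) ^ 2) t ∧
      HasDerivAt B
        (-2 * B t * (3 * A t - C t) * (3 * C t - A t) * (A t + C t) ^ 2 /
          (A t * B t * C t) ^ 2) t ∧
      HasDerivAt C
        (2 * C t * (A t + C t) ^ 3 * (3 * A t - C t) / (A t * B t * C t) ^ 2) t) :
    (∀ t ∈ Set.Ico (0 : ℝ) T, A t > C t) ∧
    AntitoneOn (fun t => A t - C t) (Set.Ico (0 : ℝ) T) ∧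
    AntitoneOn (fun t => A t / C t) (Set.Ico (0 : ℝ) T) ∧
    AntitoneOn (fun t => A t - 3 * C t) (Set.Ico (0 : ℝ) T) ∧
    ∀ t ∈ Set.Ico (0 : ℝ) T,
      HasDerivAt (fun s => A s - C s)
        (-2 * (A t + C t) ^ 4 * (A t - C t) / (A t * B t * C t) ^ 2) t ∧
      HasDerivAt (fun s => Real.log (A s / C s))
        (-8 * (A t + C t) ^ 3 * (A t - C t) / (A t * B t * C t) ^ 2) t := by
  have hpos := fun t ht => (hsol t ht).1
  have hA := fun t ht => (hsol t ht).2.1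
  have hB := fun t ht => (hsol t ht).2.2.1
  have hC := fun t ht => (hsol t ht).2.2.2
  have hsub : ∀ t ∈ Set.Ico (0 : ℝ) T, HasDerivAt (fun s => A s - C s)
      (-2 * (A t + C t) ^ 4 * (A t - C t) / (A t * B t * C t) ^ 2) t := by
    intro t ht
    refine ((hA t ht).sub (hC t ht)).congr_deriv ?_
    ring
  have hlog : ∀ t ∈ Set.Ico (0 : ℝ) T, HasDerivAt (fun s => Real.log (A s / C s))
      (-8 * (A t + C t) ^ 3 * (A t - C t) / (A t * B t * C t) ^ 2) t := by
    intro t ht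
    obtain ⟨hAt, hBt, hCt⟩ := hpos t ht
    refine (((hA t ht).div (hC t ht) hCt.ne').log (div_pos hAt hCt).ne').congr_deriv ?_
    simp only [Pi.div_apply]
    field_simp
    ring
  have hAC : ∀ t ∈ Set.Ico (0 : ℝ) T, A t > C t := by
    have hcont : ContinuousOn (fun t => 2 * (A t + C t) ^ 4 / (A t * B t * C t) ^ 2)
        (Set.Ico 0 T) := by
      have cA : ContinuousOn A (Set.Ico 0 T) := fun t ht =>
        (hA t ht).continuousAt.continuousWithinAt
      have cB : ContinuousOn B (Set.Ico 0 T) := fun t ht =>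
        (hB t ht).continuousAt.continuousWithinAt
      have cC : ContinuousOn C (Set.Ico 0 T) := fun t ht =>
        (hC t ht).continuousAt.continuousWithinAt
      refine ContinuousOn.div (by fun_prop) (by fun_prop) (fun t ht => ?_)
      obtain ⟨hAt, hBt, hCt⟩ := hpos t ht
      positivity
    intro t ht
    refine sub_pos.1 (pos_of_linear_ode (u := fun s => A s - C s) hcont (fun x hx => ?_) ?_ t ht)
    · refine (hsub x hx).congr_deriv ?_
      ring
    · simp only [hinitA, hinitC]
      linarith
  refine ⟨hAC, ?_, ?_, ?_, fun t ht => ⟨hsub t ht, hlog t ht⟩⟩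
  · refine antitoneOn_Ico_of_hasDerivAt_nonpos hsub (fun t ht => ?_)
    have := sub_pos.2 (hAC t ht)
    obtain ⟨hAt, hBt, hCt⟩ := hpos t ht
    rw [neg_mul, neg_mul, neg_div, neg_nonpos]
    positivity
  · have hanti : AntitoneOn (fun s => Real.log (A s / C s)) (Set.Ico 0 T) := by
      refine antitoneOn_Ico_of_hasDerivAt_nonpos hlog (fun t ht => ?_)
      have := sub_pos.2 (hAC t ht)
      obtain ⟨hAt, hBt, hCt⟩ := hpos t ht
      rw [neg_mul, neg_mul, neg_div, neg_nonpos]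
      positivity
    intro x hx y hy hxy
    exact (Real.log_le_log_iff (div_pos (hpos y hy).1 (hpos y hy).2.2)
      (div_pos (hpos x hx).1 (hpos x hx).2.2)).1 (hanti hx hy hxy)
  · have hder : ∀ t ∈ Set.Ico (0 : ℝ) T, HasDerivAt (fun s => A s - 3 * C s)
        (-(2 * (A t + C t) ^ 3 * (A t ^ 2 + 6 * A t * C t - 3 * C t ^ 2) /
          (A t * B t * C t) ^ 2)) t := by
      intro t ht
      refine ((hA t ht).sub ((hC t ht).const_mul 3)).congr_deriv ?_
      ring
    refine antitoneOn_Ico_of_hasDerivAt_nonpos hder (fun t ht => ?_)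
    obtain ⟨hAt, hBt, hCt⟩ := hpos t ht
    have hq : 0 ≤ A t ^ 2 + 6 * A t * C t - 3 * C t ^ 2 := by
      nlinarith [mul_pos hCt (sub_pos.2 (hAC t ht)), sq_nonneg (A t), sq_nonneg (C t)]
    rw [neg_nonpos]
    positivity
end

section
/- Let A, B, C be a maximal positive solution of the E(1,1) negative cross curvature flow ODE system with A_0 > C_0 > 0 and 3 C_0 > A_0. Set E_0 = 16(3C_0 - A_0)/A_0 > 0. Then along the solution B (dB/dt) ∈ (-128, -E_0); consequently there exists a finite time T_0 > 0 such that the solution exists on [0, T_0), B(t) → 0 as t → T_0^-, the bounds 2 E_0 (T_0 - t) < B(t)^2 < 256 (T_0 - t) hold for t ∈ [0, T_0), and A(t), C(t) → ∞ as t → T_0^-. -/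
/-!
Two facts drive the proof. First, `(A - C)² A C` is constant along the flow, so `A > C` persists;
then `A / C` decreases, and the cone `C < A < 3C` is preserved (`ConeSol.lt`,
`ConeSol.lt_three_mul`). Inside the cone `B B'` depends only on `A / C` and lies in
`(-128, -E₀)` (`ConeSol.B_mul_deriv_mem`), so `B² + 2 E₀ t` decreases and `B² + 256 t` increases;
the former forces a finite existence time `T₀`.

Second, `A` and `C` increase, `A B` decreases and `A³ B` increases. If `B` had a positive limit at
`T₀`, then `A B ≤ A₀ B₀` would bound `A` and `C`, the solution would converge inside the positive
octant, and the Picard–Lindelöf theorem would extend it past `T₀` (`ode_extend`,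
`not_tendsto_pos`). Hence `B → 0`, which turns the monotonicity of `B² + k t` into the two-sided
bounds on `B²`; and `A³ B ≥ A₀³ B₀` gives `A → ∞`, hence `C > A / 3 → ∞`.
-/

/-- A triple of functions solves the `E(1,1)` negative cross curvature flow ODE system
(with positivity) on a set `s ⊆ ℝ`. -/
def IsSolE11 (A B C : ℝ → ℝ) (s : Set ℝ) : Prop :=
  ∀ t ∈ s,
    (0 < A t ∧ 0 < B t ∧ 0 < C t) ∧
    HasDerivAt A
      (2 * A t * (A t + C t) ^ 3 * (3 * C t - A t) / (A t * B t * C t) ^ 2) t ∧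
    HasDerivAt B
      (-2 * B t * (3 * A t - C t) * (3 * C t - A t) * (A t + C t) ^ 2 /
        (A t * B t * C t) ^ 2) t ∧
    HasDerivAt C
      (2 * C t * (A t + C t) ^ 3 * (3 * A t - C t) / (A t * B t * C t) ^ 2) t

/-- A maximal solution of the `E(1,1)` system on `{t | 0 ≤ t, t < T}` (`T ∈ (0,∞]` an
extended real): it is a solution that admits no extension to a strictly larger interval. -/
def IsMaxSolE11 (A B C : ℝ → ℝ) (T : EReal) : Prop :=
  IsSolE11 A B C {t : ℝ | 0 ≤ t ∧ (t : EReal) < T} ∧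
  ∀ (A' B' C' : ℝ → ℝ) (T' : EReal), T < T' →
    IsSolE11 A' B' C' {t : ℝ | 0 ≤ t ∧ (t : EReal) < T'} →
    ¬ (∀ t : ℝ, 0 ≤ t → (t : EReal) < T → A' t = A t ∧ B' t = B t ∧ C' t = C t)

section

open Set Filter Topology

/-! ### Monotone functions, left limits and continuation of ODE solutions -/

lemma monotoneOn_of_hasDerivAt {S : Set ℝ} (hS : Convex ℝ S) {f f' : ℝ → ℝ}
    (h : ∀ t ∈ S, HasDerivAt f (f' t) t) (h0 : ∀ t ∈ S, 0 ≤ f' t) : MonotoneOn f S :=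
  monotoneOn_of_hasDerivWithinAt_nonneg hS
    (fun t ht => (h t ht).continuousAt.continuousWithinAt)
    (fun t ht => (h t (interior_subset ht)).hasDerivWithinAt)
    (fun t ht => h0 t (interior_subset ht))

lemma exists_left_limit {f : ℝ → ℝ} {T M : ℝ} (hT : 0 < T) (hf : MonotoneOn f (Ico 0 T))
    (hM : ∀ t ∈ Ico 0 T, f t ≤ M) :
    ∃ l, Tendsto f (𝓝[<] T) (𝓝 l) ∧ ∀ t ∈ Ico 0 T, f t ≤ l := by
  have hne : (Ioo 0 T).Nonempty := nonempty_Ioo.2 hT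
  have h := (hf.mono Ioo_subset_Ico_self).tendsto_nhdsWithin_Ioo_left hne
    ⟨M, by rintro _ ⟨t, ht, rfl⟩; exact hM t (Ioo_subset_Ico_self ht)⟩
  refine ⟨_, h, fun t ht => ge_of_tendsto h ?_⟩
  filter_upwards [Ioo_mem_nhdsLT ht.2] with s hs
  exact hf ht ⟨ht.1.trans hs.1.le, hs.2⟩ hs.1.le

/-- A solution of an autonomous ODE that converges, as `t → T⁻`, to a point where the vector field
is `C¹` extends past `T`, staying near the limit point on the added interval. -/
lemma ode_extend {E : Type*} [NormedAddCommGroup E] [NormedSpace ℝ E] [CompleteSpace E]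
    {F : E → E} {u : ℝ → E} {p : E} {T : ℝ} (hT : 0 < T)
    (hu : ∀ t ∈ Ico 0 T, HasDerivAt u (F (u t)) t)
    (hlim : Tendsto u (𝓝[<] T) (𝓝 p)) (hF : ContDiffAt ℝ 1 F p) {U : Set E} (hU : U ∈ 𝓝 p) :
    ∃ v : ℝ → E, ∃ ε > 0, (∀ t < T, v t = u t) ∧
      (∀ t ∈ Ico 0 (T + ε), HasDerivAt v (F (v t)) t) ∧ ∀ t ∈ Ico T (T + ε), v t ∈ U := by
  obtain ⟨α, hα0, ε, hε, hα⟩ :=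
    hF.exists_forall_mem_closedBall_exists_eq_forall_mem_Ioo_hasDerivAt₀ T
  have hαT : HasDerivAt α (F p) T := by
    have := hα T ⟨by linarith, by linarith⟩
    rwa [hα0] at this
  have hαU : ∀ᶠ t in 𝓝 T, α t ∈ U := hαT.continuousAt.eventually (by rwa [hα0])
  obtain ⟨δ, hδ, hδU⟩ := Metric.eventually_nhds_iff.1 hαU
  set v : ℝ → E := fun t => if t < T then u t else α t with hv
  have hvlt : ∀ t < T, v t = u t := fun t ht => if_pos ht
  have hvge : ∀ t, T ≤ t → v t = α t := fun t ht => if_neg (not_lt.2 ht)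
  have hvu : ∀ t < T, v =ᶠ[𝓝 t] u := fun t ht => by
    filter_upwards [Iio_mem_nhds ht] with s hs using hvlt s hs
  have hd1 : ∀ t ∈ Ico 0 T, HasDerivAt v (F (v t)) t := fun t ht => by
    rw [hvlt t ht.2]
    exact (hu t ht).congr_of_eventuallyEq (hvu t ht.2)
  have hvT : v T = p := by rw [hvge T le_rfl, hα0]
  have hvlim : Tendsto v (𝓝[<] T) (𝓝 p) := hlim.congr' <| by
    filter_upwards [self_mem_nhdsWithin] with s hs using (hvlt s hs).symm
  have hleft : HasDerivWithinAt v (F p) (Iic T) T := by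
    refine hasDerivWithinAt_Iic_of_tendsto_deriv (s := Ioo 0 T)
      (fun t ht => (hd1 t ⟨ht.1.le, ht.2⟩).differentiableAt.differentiableWithinAt) ?_
      (Ioo_mem_nhdsLT hT) ?_
    · rw [ContinuousWithinAt, hvT, nhdsWithin_Ioo_eq_nhdsLT hT]
      exact hvlim
    · refine (hF.continuousAt.tendsto.comp hvlim).congr' ?_
      filter_upwards [Ioo_mem_nhdsLT hT] with s hs
      exact (hd1 s ⟨hs.1.le, hs.2⟩).deriv.symm
  have hright : HasDerivWithinAt v (F p) (Ici T) T :=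
    hαT.hasDerivWithinAt.congr (fun t ht => hvge t ht) (hvge T le_rfl)
  refine ⟨v, min ε δ, lt_min hε hδ, hvlt, fun t ht => ?_, fun t ht => ?_⟩
  · rcases lt_trichotomy t T with h | h | h
    · exact hd1 t ⟨ht.1, h⟩
    · subst h
      rw [hvT]
      simpa using hleft.union hright
    · rw [hvge t h.le]
      have hlt : t < T + ε := ht.2.trans_le (by gcongr; exact min_le_left _ _)
      refine (hα t ⟨by linarith, hlt⟩).congr_of_eventuallyEq ?_
      filter_upwards [Ioi_mem_nhds h] with s hs using hvge s (le_of_lt hs)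
  · rw [hvge t ht.1]
    apply hδU
    have : t < T + δ := ht.2.trans_le (by gcongr; exact min_le_right _ _)
    rw [Real.dist_eq, abs_of_nonneg (by linarith [ht.1])]
    linarith

/-! ### First integral and the ratio `A / C` -/

/-- The common factor `(A + C)² / (ABC)²` of the right-hand sides of the three equations. -/
noncomputable def rateE11 (A B C : ℝ → ℝ) (t : ℝ) : ℝ :=
  (A t + C t) ^ 2 / (A t * B t * C t) ^ 2

section Flow

variable {A B C : ℝ → ℝ} {S : Set ℝ}

lemma IsSolE11.rate_pos (h : IsSolE11 A B C S) {t : ℝ} (ht : t ∈ S) :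
    0 < rateE11 A B C t := by
  obtain ⟨⟨hA, hB, hC⟩, -⟩ := h t ht
  unfold rateE11
  positivity

lemma IsSolE11.derivA (h : IsSolE11 A B C S) {t : ℝ} (ht : t ∈ S) :
    HasDerivAt A (2 * A t * (A t + C t) * (3 * C t - A t) * rateE11 A B C t) t := by
  convert (h t ht).2.1 using 1
  unfold rateE11
  ring

lemma IsSolE11.derivB (h : IsSolE11 A B C S) {t : ℝ} (ht : t ∈ S) :
    HasDerivAt B (-2 * B t * (3 * A t - C t) * (3 * C t - A t) * rateE11 A B C t) t := by
  convert (h t ht).2.2.1 using 1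
  unfold rateE11
  ring

lemma IsSolE11.derivC (h : IsSolE11 A B C S) {t : ℝ} (ht : t ∈ S) :
    HasDerivAt C (2 * C t * (A t + C t) * (3 * A t - C t) * rateE11 A B C t) t := by
  convert (h t ht).2.2.2 using 1
  unfold rateE11
  ring

/-- The quantity `(A - C)² A C` is a first integral of the system. -/
lemma IsSolE11.first_integral (h : IsSolE11 A B C S) (hS : Convex ℝ S) {a t : ℝ}
    (ha : a ∈ S) (ht : t ∈ S) :
    (A t - C t) ^ 2 * (A t * C t) = (A a - C a) ^ 2 * (A a * C a) := by
  have hd : ∀ t ∈ S, HasDerivAt (fun t => (A t - C t) ^ 2 * (A t * C t)) 0 t := fun t ht => by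
    have hA := h.derivA ht
    have hC := h.derivC ht
    refine HasDerivAt.congr_deriv (((hA.fun_sub hC).fun_pow 2).fun_mul (hA.fun_mul hC)) ?_
    push_cast
    ring
  have hle := hS.norm_image_sub_le_of_norm_hasDerivWithin_le (C := 0)
    (fun s hs => (hd s hs).hasDerivWithinAt) (fun s _ => by simp) ha ht
  rw [zero_mul, norm_le_zero_iff, sub_eq_zero] at hle
  exact hle

/-- The first integral keeps `A - C` away from zero, so its sign persists. -/
lemma IsSolE11.lt (h : IsSolE11 A B C S) (hS : Convex ℝ S) {a t : ℝ}
    (ha : a ∈ S) (hlt : C a < A a) (ht : t ∈ S) : C t < A t := by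
  by_contra! hle
  have hcont : ContinuousOn (fun t => A t - C t) S := fun s hs =>
    ((h.derivA hs).continuousAt.sub (h.derivC hs).continuousAt).continuousWithinAt
  obtain ⟨s, hs, hs0⟩ := hS.isPreconnected.intermediate_value ht ha hcont
    (show (0 : ℝ) ∈ Icc (A t - C t) (A a - C a) from ⟨by linarith, by linarith⟩)
  have hI := h.first_integral hS ha hs
  obtain ⟨⟨hA, -, hC⟩, -⟩ := h a ha
  have h1 : 0 < A a - C a := by linarith
  have h2 : 0 < (A a - C a) ^ 2 * (A a * C a) := by positivity
  simp only at hs0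
  rw [hs0] at hI
  linarith

lemma IsSolE11.ratio_antitoneOn (h : IsSolE11 A B C S) (hS : Convex ℝ S)
    (hlt : ∀ t ∈ S, C t < A t) : AntitoneOn (fun t => A t / C t) S := by
  have hm : MonotoneOn (fun t => -(A t / C t)) S := by
    refine monotoneOn_of_hasDerivAt hS (f' := fun t =>
      8 * A t * (A t + C t) * (A t - C t) * rateE11 A B C t / C t) (fun t ht => ?_)
      (fun t ht => ?_)
    · have hC0 : C t ≠ 0 := (h t ht).1.2.2.ne'
      refine HasDerivAt.congr_deriv (((h.derivA ht).fun_div (h.derivC ht) hC0).fun_neg) ?_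
      field_simp
      ring
    · obtain ⟨⟨hA, -, hC⟩, -⟩ := h t ht
      have := h.rate_pos ht
      have := sub_pos.2 (hlt t ht)
      positivity
  exact fun x hx y hy hxy => neg_le_neg_iff.1 (hm hx hy hxy)

end Flow

/-! ### Estimates in the cone `C < A < 3C` -/

/-- A solution on an interval `S ⊆ [0, ∞)` containing `0` whose initial value
lies in the cone `C < A < 3C`. -/
structure ConeSol (A B C : ℝ → ℝ) (S : Set ℝ) : Prop where
  sol : IsSolE11 A B C S
  convex : Convex ℝ S
  zero_mem : (0 : ℝ) ∈ S
  nonneg : ∀ t ∈ S, 0 ≤ t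
  lt₀ : C 0 < A 0
  lt₀' : A 0 < 3 * C 0

namespace ConeSol

variable {A B C : ℝ → ℝ} {S : Set ℝ}

lemma lt (h : ConeSol A B C S) {t : ℝ} (ht : t ∈ S) : C t < A t :=
  h.sol.lt h.convex h.zero_mem h.lt₀ ht

lemma ratio_le (h : ConeSol A B C S) {t : ℝ} (ht : t ∈ S) : A t * C 0 ≤ A 0 * C t := by
  have := h.sol.ratio_antitoneOn h.convex (fun t ht => h.lt ht) h.zero_mem ht (h.nonneg t ht)
  exact (div_le_div_iff₀ (h.sol t ht).1.2.2 (h.sol 0 h.zero_mem).1.2.2).1 this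

lemma lt_three_mul (h : ConeSol A B C S) {t : ℝ} (ht : t ∈ S) : A t < 3 * C t := by
  have h1 := h.ratio_le ht
  have h2 := (h.sol 0 h.zero_mem).1.2.2
  have h3 := (h.sol t ht).1.2.2
  have h4 := mul_lt_mul_of_pos_right h.lt₀' h3
  nlinarith

/-- Writing `m = AC` and `d = (A - C)²`, one has `(3A - C)(3C - A)(A + C)² = (4m - 3d)(4m + d)`,
which gives the lower bound; the upper bound uses `A / C ≤ A 0 / C 0`. -/
lemma B_mul_deriv_mem (h : ConeSol A B C S) {t : ℝ} (ht : t ∈ S) :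
    B t * (-2 * B t * (3 * A t - C t) * (3 * C t - A t) * rateE11 A B C t) ∈
      Ioo (-128 : ℝ) (-(16 * (3 * C 0 - A 0) / A 0)) := by
  obtain ⟨⟨hA, hB, hC⟩, -⟩ := h.sol t ht
  obtain ⟨⟨hA0, -, hC0⟩, -⟩ := h.sol 0 h.zero_mem
  have hlt := h.lt ht
  have hlt3 := h.lt_three_mul ht
  have hr := h.ratio_le ht
  have key : B t * (-2 * B t * (3 * A t - C t) * (3 * C t - A t) * rateE11 A B C t) =
      -(2 * ((3 * A t - C t) * (3 * C t - A t) * (A t + C t) ^ 2) / (A t * C t) ^ 2) := by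
    unfold rateE11
    field_simp
  rw [key]
  have hm : 0 < A t * C t := by positivity
  constructor
  · rw [neg_lt_neg_iff, div_lt_iff₀ (by positivity)]
    have hid : (3 * A t - C t) * (3 * C t - A t) * (A t + C t) ^ 2 =
        16 * (A t * C t) ^ 2 - 8 * (A t * C t) * (A t - C t) ^ 2 - 3 * ((A t - C t) ^ 2) ^ 2 := by
      ring
    rw [hid]
    have h1 : 0 ≤ (A t * C t) * (A t - C t) ^ 2 := by positivity
    have h2 : 0 ≤ ((A t - C t) ^ 2) ^ 2 := by positivity
    have h3 : 0 < (A t * C t) ^ 2 := by positivity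
    linarith
  · rw [neg_lt_neg_iff]
    have h1 : 16 * (3 * C 0 - A 0) / A 0 ≤ 16 * (3 * C t - A t) / A t := by
      rw [div_le_div_iff₀ hA0 hA]
      linarith
    refine h1.trans_lt ?_
    rw [div_lt_div_iff₀ hA (by positivity)]
    have h2 : 8 * A t * C t ^ 2 < (3 * A t - C t) * (A t + C t) ^ 2 := by
      have : (2 * A t) * (4 * C t ^ 2) < (3 * A t - C t) * (A t + C t) ^ 2 := by
        apply mul_lt_mul'' <;> nlinarith
      linarith
    have h3 : 0 < 2 * A t * (3 * C t - A t) := mul_pos (by linarith) (by linarith)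
    have := mul_lt_mul_of_pos_left h2 h3
    linarith

lemma E0_pos (h : ConeSol A B C S) : 0 < 16 * (3 * C 0 - A 0) / A 0 :=
  div_pos (by linarith [h.lt₀']) (h.sol 0 h.zero_mem).1.1

lemma neg_B_monotoneOn (h : ConeSol A B C S) : MonotoneOn (fun t => -B t) S := by
  refine monotoneOn_of_hasDerivAt h.convex (fun t ht => (h.sol.derivB ht).fun_neg)
    (fun t ht => ?_)
  have h1 := (h.B_mul_deriv_mem ht).2
  have h2 := h.E0_pos
  have h3 := (h.sol t ht).1.2.1
  by_contra! h4
  linarith [mul_pos h3 (neg_lt_zero.1 h4)]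

lemma A_monotoneOn (h : ConeSol A B C S) : MonotoneOn A S := by
  refine monotoneOn_of_hasDerivAt h.convex (fun t ht => h.sol.derivA ht) (fun t ht => ?_)
  obtain ⟨⟨hA, -, hC⟩, -⟩ := h.sol t ht
  have := h.sol.rate_pos ht
  have := sub_pos.2 (h.lt_three_mul ht)
  positivity

lemma C_monotoneOn (h : ConeSol A B C S) : MonotoneOn C S := by
  refine monotoneOn_of_hasDerivAt h.convex (fun t ht => h.sol.derivC ht) (fun t ht => ?_)
  obtain ⟨⟨hA, -, hC⟩, -⟩ := h.sol t ht
  have := h.sol.rate_pos ht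
  have : 0 < 3 * A t - C t := by linarith [h.lt ht]
  positivity

/-- Bounds the growth of `A` from above as long as `B` stays away from zero. -/
lemma neg_AB_monotoneOn (h : ConeSol A B C S) : MonotoneOn (fun t => -(A t * B t)) S := by
  refine monotoneOn_of_hasDerivAt h.convex (f' := fun t =>
    4 * (A t * B t) * (A t - C t) * (3 * C t - A t) * rateE11 A B C t)
    (fun t ht => ?_) (fun t ht => ?_)
  · refine HasDerivAt.congr_deriv (((h.sol.derivA ht).fun_mul (h.sol.derivB ht)).fun_neg) ?_
    ring
  · obtain ⟨⟨hA, hB, hC⟩, -⟩ := h.sol t ht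
    have := h.sol.rate_pos ht
    have := sub_pos.2 (h.lt_three_mul ht)
    have := sub_pos.2 (h.lt ht)
    positivity

/-- Forces `A` to blow up when `B` tends to zero. -/
lemma A_cube_B_monotoneOn (h : ConeSol A B C S) : MonotoneOn (fun t => A t ^ 3 * B t) S := by
  refine monotoneOn_of_hasDerivAt h.convex (f' := fun t =>
    8 * (A t ^ 3 * B t) * C t * (3 * C t - A t) * rateE11 A B C t)
    (fun t ht => ?_) (fun t ht => ?_)
  · refine HasDerivAt.congr_deriv (((h.sol.derivA ht).fun_pow 3).fun_mul (h.sol.derivB ht)) ?_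
    push_cast
    ring
  · obtain ⟨⟨hA, hB, hC⟩, -⟩ := h.sol t ht
    have := h.sol.rate_pos ht
    have := sub_pos.2 (h.lt_three_mul ht)
    positivity

lemma hasDerivAt_B_sq (h : ConeSol A B C S) {t : ℝ} (ht : t ∈ S) :
    HasDerivAt (fun t => B t ^ 2)
      (2 * (B t * (-2 * B t * (3 * A t - C t) * (3 * C t - A t) * rateE11 A B C t))) t := by
  refine HasDerivAt.congr_deriv ((h.sol.derivB ht).fun_pow 2) ?_
  push_cast
  ring

lemma upper_strictMonoOn (h : ConeSol A B C S) :
    StrictMonoOn (fun t => B t ^ 2 + 256 * t) S := by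
  have hd : ∀ t ∈ S, HasDerivAt (fun t => B t ^ 2 + 256 * t) _ t := fun t ht =>
    (h.hasDerivAt_B_sq ht).fun_add ((hasDerivAt_id t).const_mul 256)
  refine strictMonoOn_of_hasDerivWithinAt_pos h.convex
    (fun t ht => (hd t ht).continuousAt.continuousWithinAt)
    (fun t ht => (hd t (interior_subset ht)).hasDerivWithinAt) (fun t ht => ?_)
  linarith [(h.B_mul_deriv_mem (interior_subset ht)).1]

lemma lower_strictAntiOn (h : ConeSol A B C S) :
    StrictAntiOn (fun t => B t ^ 2 + 2 * (16 * (3 * C 0 - A 0) / A 0) * t) S := by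
  have hd : ∀ t ∈ S, HasDerivAt
      (fun t => B t ^ 2 + 2 * (16 * (3 * C 0 - A 0) / A 0) * t) _ t := fun t ht =>
    (h.hasDerivAt_B_sq ht).fun_add
      ((hasDerivAt_id t).const_mul (2 * (16 * (3 * C 0 - A 0) / A 0)))
  refine strictAntiOn_of_hasDerivWithinAt_neg h.convex
    (fun t ht => (hd t ht).continuousAt.continuousWithinAt)
    (fun t ht => (hd t (interior_subset ht)).hasDerivWithinAt) (fun t ht => ?_)
  linarith [(h.B_mul_deriv_mem (interior_subset ht)).2]

end ConeSol

/-! ### Maximality and behaviour at the final time -/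

/-- The vector field of the system on triples `(A, B, C)`. -/
noncomputable def fieldE11 (p : ℝ × ℝ × ℝ) : ℝ × ℝ × ℝ :=
  (2 * p.1 * (p.1 + p.2.2) ^ 3 * (3 * p.2.2 - p.1) / (p.1 * p.2.1 * p.2.2) ^ 2,
    -2 * p.2.1 * (3 * p.1 - p.2.2) * (3 * p.2.2 - p.1) * (p.1 + p.2.2) ^ 2 /
      (p.1 * p.2.1 * p.2.2) ^ 2,
    2 * p.2.2 * (p.1 + p.2.2) ^ 3 * (3 * p.1 - p.2.2) / (p.1 * p.2.1 * p.2.2) ^ 2)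

lemma contDiffAt_fieldE11 {p : ℝ × ℝ × ℝ} (h1 : 0 < p.1) (h2 : 0 < p.2.1) (h3 : 0 < p.2.2) :
    ContDiffAt ℝ 1 fieldE11 p := by
  have h : (p.1 * p.2.1 * p.2.2) ^ 2 ≠ 0 := by positivity
  unfold fieldE11
  refine ContDiffAt.prodMk ?_ (ContDiffAt.prodMk ?_ ?_)
  all_goals exact ContDiffAt.div (by fun_prop) (by fun_prop) h

/-- A maximal solution cannot converge to a point of the positive octant in finite time. -/
lemma not_tendsto_pos {A B C : ℝ → ℝ} {T a b c : ℝ} (hT : 0 < T)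
    (hmax : IsMaxSolE11 A B C (T : EReal)) (ha : 0 < a) (hb : 0 < b) (hc : 0 < c)
    (hA : Tendsto A (𝓝[<] T) (𝓝 a)) (hB : Tendsto B (𝓝[<] T) (𝓝 b))
    (hC : Tendsto C (𝓝[<] T) (𝓝 c)) : False := by
  obtain ⟨hsol, hno⟩ := hmax
  have hu : ∀ t ∈ Ico 0 T, HasDerivAt (fun t => (A t, B t, C t))
      (fieldE11 (A t, B t, C t)) t := fun t ht => by
    obtain ⟨-, h1, h2, h3⟩ := hsol t ⟨ht.1, by exact_mod_cast ht.2⟩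
    exact h1.prodMk (h2.prodMk h3)
  have hU : {p : ℝ × ℝ × ℝ | 0 < p.1 ∧ 0 < p.2.1 ∧ 0 < p.2.2} ∈ 𝓝 (a, b, c) := by
    refine IsOpen.mem_nhds ?_ ⟨ha, hb, hc⟩
    exact (isOpen_lt continuous_const continuous_fst).inter
      ((isOpen_lt continuous_const (continuous_fst.comp continuous_snd)).inter
        (isOpen_lt continuous_const (continuous_snd.comp continuous_snd)))
  obtain ⟨v, ε, hε, hvu, hv, hvU⟩ := ode_extend hT hu
    (hA.prodMk_nhds (hB.prodMk_nhds hC)) (contDiffAt_fieldE11 ha hb hc) hU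
  refine hno (fun t => (v t).1) (fun t => (v t).2.1) (fun t => (v t).2.2)
    ((T + ε : ℝ) : EReal) (by exact_mod_cast (by linarith : T < T + ε)) ?_ ?_
  · rintro t ⟨ht0, ht⟩
    have ht' : t < T + ε := by exact_mod_cast ht
    have hd := hv t ⟨ht0, ht'⟩
    refine ⟨?_, ?_, ?_, ?_⟩
    · rcases lt_or_ge t T with hlt | hge
      · simp only [hvu t hlt]
        exact (hsol t ⟨ht0, by exact_mod_cast hlt⟩).1
      · exact hvU t ⟨hge, ht'⟩
    · simpa [fieldE11] using hd.hasFDerivAt.fst.hasDerivAt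
    · simpa [fieldE11] using hd.hasFDerivAt.snd.fst.hasDerivAt
    · simpa [fieldE11] using hd.hasFDerivAt.snd.snd.hasDerivAt
  · intro t _ ht
    simp [hvu t (by exact_mod_cast ht)]

lemma finite_time {A B C : ℝ → ℝ} {T : EReal} (hT : 0 < T)
    (h : ConeSol A B C {t : ℝ | 0 ≤ t ∧ (t : EReal) < T}) :
    ∃ T0 : ℝ, 0 < T0 ∧ T = (T0 : EReal) := by
  induction T with
  | bot => simp at hT
  | coe r => exact ⟨r, by exact_mod_cast hT, rfl⟩
  | top =>
    exfalso
    have hE := h.E0_pos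
    set E := 16 * (3 * C 0 - A 0) / A 0 with hEdef
    have h0 : 0 ≤ (B 0 ^ 2 + 1) / (2 * E) := by positivity
    have := h.lower_strictAntiOn.antitoneOn h.zero_mem ⟨h0, EReal.coe_lt_top _⟩ h0
    simp only [← hEdef, mul_zero, add_zero] at this
    rw [mul_div_cancel₀ _ (by positivity)] at this
    nlinarith [sq_nonneg (B ((B 0 ^ 2 + 1) / (2 * E)))]

/-- If `B` had a positive limit, then `AB ≤ A 0 B 0` would bound the increasing functions
`A` and `C < A`, and the solution would converge inside the positive octant. -/
lemma tendsto_B_zero {A B C : ℝ → ℝ} {T : ℝ} (hT : 0 < T)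
    (hmax : IsMaxSolE11 A B C (T : EReal)) (h : ConeSol A B C (Ico 0 T)) :
    Tendsto B (𝓝[<] T) (𝓝 0) := by
  obtain ⟨l, hl, hle⟩ := exists_left_limit hT h.neg_B_monotoneOn
    (M := 0) (fun t ht => by linarith [(h.sol t ht).1.2.1])
  have hl' : Tendsto B (𝓝[<] T) (𝓝 (-l)) := by simpa using hl.neg
  have hl0 : 0 ≤ -l := ge_of_tendsto hl' <| by
    filter_upwards [Ioo_mem_nhdsLT hT] with t ht
    exact (h.sol t ⟨ht.1.le, ht.2⟩).1.2.1.le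
  rcases hl0.eq_or_lt with h0 | hpos
  · rwa [← h0] at hl'
  exfalso
  have hbd : ∀ t ∈ Ico 0 T, A t ≤ A 0 * B 0 / (-l) := fun t ht => by
    rw [le_div_iff₀ hpos]
    have h1 := h.neg_AB_monotoneOn h.zero_mem ht ht.1
    have h2 := hle t ht
    have h3 := (h.sol t ht).1.1
    simp only at h1 h2
    nlinarith
  obtain ⟨a, ha, hale⟩ := exists_left_limit hT h.A_monotoneOn hbd
  obtain ⟨c, hc, hcle⟩ := exists_left_limit hT h.C_monotoneOn
    (fun t ht => (h.lt ht).le.trans (hbd t ht))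
  obtain ⟨⟨hA0, -, hC0⟩, -⟩ := h.sol 0 h.zero_mem
  exact not_tendsto_pos hT hmax (hA0.trans_le (hale 0 h.zero_mem)) hpos
    (hC0.trans_le (hcle 0 h.zero_mem)) ha hl' hc

lemma tendsto_A_atTop {A B C : ℝ → ℝ} {T : ℝ} (hT : 0 < T) (h : ConeSol A B C (Ico 0 T))
    (hB : Tendsto B (𝓝[<] T) (𝓝 0)) : Tendsto A (𝓝[<] T) atTop := by
  obtain ⟨⟨hA0, hB0, -⟩, -⟩ := h.sol 0 h.zero_mem
  have hk : 0 < A 0 ^ 3 * B 0 := by positivity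
  refine tendsto_atTop.2 fun M => ?_
  have hM : 0 < max M 1 := by positivity
  have hsmall : ∀ᶠ t in 𝓝[<] T, B t < A 0 ^ 3 * B 0 / (max M 1) ^ 3 :=
    hB.eventually_lt_const (by positivity)
  filter_upwards [hsmall, Ioo_mem_nhdsLT hT] with t hBt ht
  have htS : t ∈ Ico 0 T := ⟨ht.1.le, ht.2⟩
  obtain ⟨⟨hA, hBp, -⟩, -⟩ := h.sol t htS
  have h1 : A 0 ^ 3 * B 0 ≤ A t ^ 3 * B t := h.A_cube_B_monotoneOn h.zero_mem htS htS.1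
  rw [lt_div_iff₀ (by positivity)] at hBt
  by_contra! hlt
  have h2 : A t ^ 3 ≤ (max M 1) ^ 3 :=
    pow_le_pow_left₀ hA.le (hlt.le.trans (le_max_left _ _)) 3
  nlinarith [mul_le_mul_of_nonneg_left h2 hBp.le]

lemma tendsto_C_atTop {A B C : ℝ → ℝ} {T : ℝ} (hT : 0 < T) (h : ConeSol A B C (Ico 0 T))
    (hA : Tendsto A (𝓝[<] T) atTop) : Tendsto C (𝓝[<] T) atTop := by
  refine tendsto_atTop_mono' _ ?_ (hA.atTop_div_const (by norm_num : (0 : ℝ) < 3))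
  filter_upwards [Ioo_mem_nhdsLT hT] with t ht
  linarith [h.lt_three_mul ⟨ht.1.le, ht.2⟩]

/-- A strictly increasing function on `[0, T)` stays strictly below its limit at `T`. -/
lemma lt_left_limit {f : ℝ → ℝ} {T l : ℝ} (hf : StrictMonoOn f (Ico 0 T))
    (hl : Tendsto f (𝓝[<] T) (𝓝 l)) {t : ℝ} (ht : t ∈ Ico 0 T) : f t < l := by
  obtain ⟨s, hts, hsT⟩ := exists_between ht.2
  have hs : s ∈ Ico 0 T := ⟨ht.1.trans hts.le, hsT⟩
  refine (hf ht hs hts).trans_le (ge_of_tendsto hl ?_)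
  filter_upwards [Ioo_mem_nhdsLT hsT] with r hr
  exact hf.monotoneOn hs ⟨hs.1.trans hr.1.le, hr.2⟩ hr.1.le

lemma B_sq_bounds {A B C : ℝ → ℝ} {T : ℝ} (h : ConeSol A B C (Ico 0 T))
    (hB : Tendsto B (𝓝[<] T) (𝓝 0)) {t : ℝ} (ht : t ∈ Ico 0 T) :
    2 * (16 * (3 * C 0 - A 0) / A 0) * (T - t) < B t ^ 2 ∧ B t ^ 2 < 256 * (T - t) := by
  have hid : Tendsto (fun t : ℝ => t) (𝓝[<] T) (𝓝 T) :=
    tendsto_nhdsWithin_of_tendsto_nhds tendsto_id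
  have hlim : ∀ k : ℝ, Tendsto (fun t => B t ^ 2 + k * t) (𝓝[<] T) (𝓝 (k * T)) := fun k => by
    simpa using (hB.pow 2).add (hid.const_mul k)
  have h1 := lt_left_limit h.upper_strictMonoOn (hlim 256) ht
  have h2 := lt_left_limit h.lower_strictAntiOn.neg (hlim _).neg ht
  constructor <;> linarith

end

/-- For a maximal positive solution of the `E(1,1)` negative cross curvature flow with
`A0 > C0 > 0` and `3C0 > A0`, setting `E0 = 16(3C0 - A0)/A0`: one has
`B·(dB/dt) ∈ (-128, -E0)` along the flow, the solution exists only up to a finite time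
`T0 > 0`, `2E0(T0 - t) < B² < 256(T0 - t)` on `[0, T0)`, `B → 0` and `A, C → ∞` as
`t → T0⁻`. -/
theorem sol_E11_blowup_symmetric_cone
    (A0 B0 C0 : ℝ) (hB0 : 0 < B0) (hC0 : 0 < C0)
    (hA0C0 : A0 > C0) (h3C0 : 3 * C0 > A0)
    (E0 : ℝ) (hE0 : E0 = 16 * (3 * C0 - A0) / A0)
    (A B C : ℝ → ℝ) (T : EReal) (hT : 0 < T)
    (hmax : IsMaxSolE11 A B C T)
    (hinitA : A 0 = A0) (hinitB : B 0 = B0) (hinitC : C 0 = C0) :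
    (∀ t : ℝ, 0 ≤ t → (t : EReal) < T →
      B t * deriv B t ∈ Set.Ioo (-128 : ℝ) (-E0)) ∧
    ∃ T0 : ℝ, 0 < T0 ∧ T = (T0 : EReal) ∧
      (∀ t : ℝ, 0 ≤ t → t < T0 →
        2 * E0 * (T0 - t) < B t ^ 2 ∧ B t ^ 2 < 256 * (T0 - t)) ∧
      Filter.Tendsto B (nhdsWithin T0 (Set.Iio T0)) (nhds 0) ∧
      Filter.Tendsto A (nhdsWithin T0 (Set.Iio T0)) Filter.atTop ∧
      Filter.Tendsto C (nhdsWithin T0 (Set.Iio T0)) Filter.atTop := by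
  have hcone : ConeSol A B C {t : ℝ | 0 ≤ t ∧ (t : EReal) < T} :=
    { sol := hmax.1
      convex := by
        refine Set.OrdConnected.convex ⟨fun x hx y hy z hz => ⟨hx.1.trans hz.1, ?_⟩⟩
        exact lt_of_le_of_lt (by exact_mod_cast hz.2) hy.2
      zero_mem := ⟨le_rfl, by simpa using hT⟩
      nonneg := fun t ht => ht.1
      lt₀ := by rw [hinitA, hinitC]; exact hA0C0
      lt₀' := by rw [hinitA, hinitC]; exact h3C0 }
  have hE : E0 = 16 * (3 * C 0 - A 0) / A 0 := by rw [hinitA, hinitC, hE0]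
  refine ⟨fun t ht0 htT => ?_, ?_⟩
  · rw [(hcone.sol.derivB ⟨ht0, htT⟩).deriv, hE]
    exact hcone.B_mul_deriv_mem ⟨ht0, htT⟩
  · obtain ⟨T0, hT0, rfl⟩ := finite_time hT hcone
    have hset : {t : ℝ | 0 ≤ t ∧ (t : EReal) < (T0 : EReal)} = Set.Ico 0 T0 := by
      ext t
      simp
    rw [hset] at hcone
    have hB := tendsto_B_zero hT0 hmax hcone
    have hA := tendsto_A_atTop hT0 hcone hB
    refine ⟨T0, hT0, rfl, fun t ht0 ht => ?_, hB, hA, tendsto_C_atTop hT0 hcone hA⟩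
    rw [hE]
    exact B_sq_bounds hcone hB ⟨ht0, ht⟩
end

section
/- Let A, B, C be a maximal positive solution of the E(1,1) negative cross curvature flow ODE system with A_0 > C_0 > 0 and 3 C_0 ≤ A_0. Then there exists a time t_1 ≥ 0 in the interval of existence such that 3 C(t_1) > A(t_1); i.e., the solution cannot satisfy 3C ≤ A for its entire interval of existence. -/
open Set Filter Topology

/-- A solution of an autonomous ODE on `[0, τ)` that converges, as `t → τ⁻`, to a point `x` where the
vector field is `C¹` extends past `τ`, and the new piece can be kept in any neighbourhood of `x`. -/
lemma exists_extension {E : Type*} [NormedAddCommGroup E] [NormedSpace ℝ E] [CompleteSpace E]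
    {F : E → E} {X : ℝ → E} {τ : ℝ} {x : E} {U : Set E} (hτ : 0 < τ) (hF : ContDiffAt ℝ 1 F x)
    (hX : ∀ t ∈ Ico 0 τ, HasDerivAt X (F (X t)) t) (hlim : Tendsto X (𝓝[<] τ) (𝓝 x))
    (hU : U ∈ 𝓝 x) :
    ∃ Y : ℝ → E, ∃ ε > 0, (∀ t < τ, Y t = X t) ∧ (∀ t ∈ Ico τ (τ + ε), Y t ∈ U) ∧
      ∀ t ∈ Ico 0 (τ + ε), HasDerivAt Y (F (Y t)) t := by
  obtain ⟨α, hα0, ε₁, hε₁, hα⟩ :=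
    hF.exists_forall_mem_closedBall_exists_eq_forall_mem_Ioo_hasDerivAt₀ τ
  have hατ : HasDerivAt α (F x) τ := by
    simpa [hα0] using hα τ ⟨by linarith, by linarith⟩
  have hαU : ∀ᶠ t in 𝓝 τ, α t ∈ U := hατ.continuousAt (by rwa [hα0])
  obtain ⟨ε₂, hε₂, hball⟩ := Metric.eventually_nhds_iff.1 hαU
  set Y : ℝ → E := fun t => if t < τ then X t else α t with hY
  have hYl : ∀ t < τ, Y t = X t := fun t ht => by simp [hY, ht]
  have hYr : ∀ t, τ ≤ t → Y t = α t := fun t ht => by simp [hY, ht]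
  have hYX : ∀ t < τ, Y =ᶠ[𝓝 t] X := fun t ht => by
    filter_upwards [Iio_mem_nhds ht] with s hs using hYl s hs
  have hYd : ∀ t ∈ Ico 0 τ, HasDerivAt Y (F (X t)) t := fun t ht =>
    (hX t ht).congr_of_eventuallyEq (hYX t ht.2)
  have hYτ : Y τ = x := by rw [hYr τ le_rfl, hα0]
  -- The left derivative at `τ` is the limit `F x` of the derivatives `F (X t)`.
  have hleft : HasDerivWithinAt Y (F x) (Iic τ) τ := by
    have hmem : Ioo 0 τ ∈ 𝓝[<] τ := Ioo_mem_nhdsLT hτ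
    refine hasDerivWithinAt_Iic_of_tendsto_deriv (s := Ioo 0 τ) ?_ ?_ hmem ?_
    · intro t ht
      exact (hYd t ⟨ht.1.le, ht.2⟩).differentiableAt.differentiableWithinAt
    · have h : Tendsto Y (𝓝[<] τ) (𝓝 (Y τ)) := by
        rw [hYτ]
        refine hlim.congr' ?_
        filter_upwards [self_mem_nhdsWithin] with t ht using (hYl t ht).symm
      exact h.mono_left (nhdsWithin_mono _ fun t ht => ht.2)
    · refine (hF.continuousAt.tendsto.comp hlim).congr' ?_
      filter_upwards [hmem] with t ht
      exact (hYd t ⟨ht.1.le, ht.2⟩).deriv.symm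
  have hright : HasDerivWithinAt Y (F x) (Ici τ) τ :=
    hατ.hasDerivWithinAt.congr (fun t ht => hYr t ht) (hYr τ le_rfl)
  refine ⟨Y, min ε₁ ε₂, lt_min hε₁ hε₂, hYl, fun t ht => ?_, fun t ht => ?_⟩
  · rw [hYr t ht.1]
    apply hball
    rw [Real.dist_eq, abs_of_nonneg (by linarith [ht.1])]
    linarith [ht.2, min_le_right ε₁ ε₂]
  · rcases lt_trichotomy t τ with h | h | h
    · rw [hYl t h]
      exact hYd t ⟨ht.1, h⟩
    · subst h
      rw [hYτ]
      simpa using hleft.union hright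
    · rw [hYr t h.le]
      refine (hα t ⟨by linarith, by linarith [ht.2, min_le_left ε₁ ε₂]⟩).congr_of_eventuallyEq ?_
      filter_upwards [Ioi_mem_nhds h] with s hs using hYr s (le_of_lt hs)

/-- A maximal solution cannot have a limit in the open positive octant at a finite final time. -/
lemma IsMaxSolE11.not_tendsto {A B C : ℝ → ℝ} {τ a b c : ℝ} (hτ : 0 < τ)
    (hmax : IsMaxSolE11 A B C (τ : EReal)) (ha : 0 < a) (hb : 0 < b) (hc : 0 < c)
    (hA : Tendsto A (𝓝[<] τ) (𝓝 a)) (hB : Tendsto B (𝓝[<] τ) (𝓝 b))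
    (hC : Tendsto C (𝓝[<] τ) (𝓝 c)) : False := by
  have hsol : ∀ t ∈ Ico 0 τ, HasDerivAt (fun s => (A s, B s, C s))
      (fieldE11 (A t, B t, C t)) t := fun t ht => by
    obtain ⟨-, h1, h2, h3⟩ := hmax.1 t ⟨ht.1, by exact_mod_cast ht.2⟩
    exact h1.prodMk (h2.prodMk h3)
  have hU : {p : ℝ × ℝ × ℝ | 0 < p.1 ∧ 0 < p.2.1 ∧ 0 < p.2.2} ∈ 𝓝 (a, b, c) := by
    refine IsOpen.mem_nhds ?_ ⟨ha, hb, hc⟩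
    have o1 : IsOpen {p : ℝ × ℝ × ℝ | 0 < p.1} := isOpen_lt (by fun_prop) (by fun_prop)
    have o2 : IsOpen {p : ℝ × ℝ × ℝ | 0 < p.2.1} := isOpen_lt (by fun_prop) (by fun_prop)
    have o3 : IsOpen {p : ℝ × ℝ × ℝ | 0 < p.2.2} := isOpen_lt (by fun_prop) (by fun_prop)
    exact o1.inter (o2.inter o3)
  obtain ⟨Y, ε, hε, hYX, hYU, hY⟩ := exists_extension hτ
    (contDiffAt_fieldE11 (p := (a, b, c)) ha hb hc) hsol
    (hA.prodMk_nhds (hB.prodMk_nhds hC)) hU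
  refine hmax.2 (fun t => (Y t).1) (fun t => (Y t).2.1) (fun t => (Y t).2.2)
    ((τ + ε : ℝ) : EReal) (by exact_mod_cast (by linarith : τ < τ + ε)) ?_ ?_
  · rintro t ⟨ht0, ht⟩
    have ht' : t < τ + ε := by exact_mod_cast ht
    have hd := hY t ⟨ht0, ht'⟩
    refine ⟨?_, hd.fst, hd.snd.fst, hd.snd.snd⟩
    rcases lt_or_ge t τ with h | h
    · simp only [hYX t h]
      exact (hmax.1 t ⟨ht0, by exact_mod_cast h⟩).1
    · exact hYU t ⟨h, ht'⟩
  · intro t _ ht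
    simp [hYX t (by exact_mod_cast ht)]

/-- A priori estimates for a solution that stays in the region `3C ≤ A`. In the last conjunct,
`k` is a lower bound for `C'`. -/
lemma E11_bounds {A B C : ℝ → ℝ} {s : Set ℝ} (hs : Convex ℝ s) (h0 : (0 : ℝ) ∈ s)
    (hpos : ∀ t ∈ s, 0 ≤ t) (hsol : IsSolE11 A B C s) (hcone : ∀ t ∈ s, 3 * C t ≤ A t) :
    AntitoneOn A s ∧ MonotoneOn B s ∧ MonotoneOn C s ∧
      (∀ t ∈ s, B t ≤ B 0 / C 0 * A 0) ∧
      ∃ k > 0, ∀ t ∈ s, C 0 + k * t ≤ A 0 := by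
  have hsub : interior s ⊆ s := interior_subset
  have hAanti : AntitoneOn A s := by
    refine antitoneOn_of_hasDerivWithinAt_nonpos hs
      (fun t ht => (hsol t ht).2.1.continuousAt.continuousWithinAt)
      (fun t ht => (hsol t (hsub ht)).2.1.hasDerivWithinAt) fun t ht => ?_
    obtain ⟨⟨ha, hb, hc⟩, -⟩ := hsol t (hsub ht)
    refine div_nonpos_of_nonpos_of_nonneg (mul_nonpos_of_nonneg_of_nonpos (by positivity) ?_)
      (by positivity)
    linarith [hcone t (hsub ht)]
  have hBmono : MonotoneOn B s := by
    refine monotoneOn_of_hasDerivWithinAt_nonneg hs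
      (fun t ht => (hsol t ht).2.2.1.continuousAt.continuousWithinAt)
      (fun t ht => (hsol t (hsub ht)).2.2.1.hasDerivWithinAt) fun t ht => ?_
    obtain ⟨⟨ha, hb, hc⟩, -⟩ := hsol t (hsub ht)
    have h := hcone t (hsub ht)
    have h1 : 0 ≤ 3 * A t - C t := by linarith
    have h2 : 0 ≤ A t - 3 * C t := by linarith
    have h3 : 0 ≤ 2 * B t * (3 * A t - C t) * (A t - 3 * C t) * (A t + C t) ^ 2 := by positivity
    exact div_nonneg (by linarith) (by positivity)
  have hCmono : MonotoneOn C s := by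
    refine monotoneOn_of_hasDerivWithinAt_nonneg hs
      (fun t ht => (hsol t ht).2.2.2.continuousAt.continuousWithinAt)
      (fun t ht => (hsol t (hsub ht)).2.2.2.hasDerivWithinAt) fun t ht => ?_
    obtain ⟨⟨ha, hb, hc⟩, -⟩ := hsol t (hsub ht)
    have h := hcone t (hsub ht)
    have h1 : 0 ≤ 3 * A t - C t := by linarith
    positivity
  have hBC : AntitoneOn (fun t => B t / C t) s := by
    have hd : ∀ t ∈ s, HasDerivAt (fun t => B t / C t) _ t := fun t ht =>
      (hsol t ht).2.2.1.fun_div (hsol t ht).2.2.2 (hsol t ht).1.2.2.ne'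
    refine antitoneOn_of_hasDerivWithinAt_nonpos hs
      (fun t ht => (hd t ht).continuousAt.continuousWithinAt)
      (fun t ht => (hd t (hsub ht)).hasDerivWithinAt) fun t ht => ?_
    obtain ⟨⟨ha, hb, hc⟩, -⟩ := hsol t (hsub ht)
    have h := hcone t (hsub ht)
    have h1 : 0 ≤ 3 * A t - C t := by linarith
    refine div_nonpos_of_nonpos_of_nonneg ?_ (by positivity)
    have h2 : 0 ≤ 8 * B t * C t ^ 2 * (3 * A t - C t) * (A t + C t) ^ 2 /
        (A t * B t * C t) ^ 2 := by positivity
    refine le_of_eq_of_le ?_ (neg_nonpos.2 h2)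
    ring
  obtain ⟨⟨hA0, hB0, hC0⟩, -⟩ := hsol 0 h0
  have hAle : ∀ t ∈ s, A t ≤ A 0 := fun t ht => hAanti h0 ht (hpos t ht)
  have hCge : ∀ t ∈ s, C 0 ≤ C t := fun t ht => hCmono h0 ht (hpos t ht)
  have hCle : ∀ t ∈ s, C t ≤ A 0 := fun t ht => by
    linarith [hcone t ht, hAle t ht, (hsol t ht).1.2.2]
  have hBle : ∀ t ∈ s, B t ≤ B 0 / C 0 * A 0 := fun t ht => by
    have h : B t / C t ≤ B 0 / C 0 := hBC h0 ht (hpos t ht)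
    have hc := (hsol t ht).1.2.2
    calc B t ≤ B 0 / C 0 * C t := (div_le_iff₀ hc).1 h
      _ ≤ B 0 / C 0 * A 0 := mul_le_mul_of_nonneg_left (hCle t ht) (by positivity)
  refine ⟨hAanti, hBmono, hCmono, hBle, ?_⟩
  set K : ℝ := A 0 * (B 0 / C 0 * A 0) * A 0 with hK
  have hKpos : 0 < K := by positivity
  set k : ℝ := 2 * C 0 * C 0 ^ 3 * C 0 / K ^ 2 with hk
  refine ⟨k, by positivity, fun t ht => ?_⟩
  have hd : ∀ t ∈ s, HasDerivAt (fun t => C t - k * t) _ t := fun t ht =>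
    (hsol t ht).2.2.2.fun_sub ((hasDerivAt_id' t).const_mul k)
  have hmono : MonotoneOn (fun t => C t - k * t) s := by
    refine monotoneOn_of_hasDerivWithinAt_nonneg hs
      (fun t ht => (hd t ht).continuousAt.continuousWithinAt)
      (fun t ht => (hd t (hsub ht)).hasDerivWithinAt) fun t ht => ?_
    have ht := hsub ht
    obtain ⟨⟨ha, hb, hc⟩, -⟩ := hsol t ht
    have h := hcone t ht
    have hc0 := hCge t ht
    have h1 : C 0 ≤ 3 * A t - C t := by linarith
    have h2 : C 0 ≤ A t + C t := by linarith
    have hABC : A t * B t * C t ≤ K := by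
      have := hAle t ht
      have := hBle t ht
      have := hCle t ht
      rw [hK]
      gcongr
    have h1' : 0 ≤ 3 * A t - C t := by linarith
    have : k ≤ 2 * C t * (A t + C t) ^ 3 * (3 * A t - C t) / (A t * B t * C t) ^ 2 := by
      rw [hk]
      gcongr
    linarith
  have h := hmono h0 ht (hpos t ht)
  simp only [mul_zero, sub_zero] at h
  linarith [hCle t ht]

/-- For a maximal positive solution of the `E(1,1)` negative cross curvature flow with
`A0 > C0 > 0` and `3C0 ≤ A0`, there is a time `t1 ≥ 0` in the interval of existence at
which `3C(t1) > A(t1)`; i.e. the condition `3C ≤ A` cannot persist. -/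
theorem sol_E11_leaves_cone
    (A0 B0 C0 : ℝ) (hB0 : 0 < B0) (hC0 : 0 < C0)
    (hA0C0 : A0 > C0) (h3C0 : 3 * C0 ≤ A0)
    (A B C : ℝ → ℝ) (T : EReal) (hT : 0 < T)
    (hmax : IsMaxSolE11 A B C T)
    (hinitA : A 0 = A0) (hinitB : B 0 = B0) (hinitC : C 0 = C0) :
    ∃ t1 : ℝ, 0 ≤ t1 ∧ (t1 : EReal) < T ∧ 3 * C t1 > A t1 := by
  by_contra! hcon
  set s : Set ℝ := {t : ℝ | 0 ≤ t ∧ (t : EReal) < T} with hs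
  have h0 : (0 : ℝ) ∈ s := ⟨le_rfl, by exact_mod_cast hT⟩
  have hconv : Convex ℝ s := by
    refine OrdConnected.convex ⟨fun x hx y hy z hz => ⟨hx.1.trans hz.1, ?_⟩⟩
    exact lt_of_le_of_lt (by exact_mod_cast hz.2) hy.2
  have hcone : ∀ t ∈ s, 3 * C t ≤ A t := fun t ht => hcon t ht.1 ht.2
  obtain ⟨hA, hB, hC, hBle, k, hk, hkt⟩ :=
    E11_bounds hconv h0 (fun t ht => ht.1) hmax.1 hcone
  induction T with
  | bot => simp at hT
  | top =>
    have hA0 : 0 < A 0 := (hmax.1 0 h0).1.1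
    have h := hkt (A 0 / k) ⟨by positivity, EReal.coe_lt_top _⟩
    rw [mul_div_cancel₀ _ hk.ne'] at h
    linarith [(hmax.1 0 h0).1.2.2]
  | coe τ =>
    have hτ : 0 < τ := by exact_mod_cast hT
    have hsub : Ioo 0 τ ⊆ s := fun t ht => ⟨ht.1.le, by exact_mod_cast ht.2⟩
    have hne : (Ioo 0 τ).Nonempty := nonempty_Ioo.2 hτ
    have hmem : Ioo 0 τ ∈ 𝓝[<] τ := Ioo_mem_nhdsLT hτ
    have hAlow : ∀ t ∈ s, 3 * C 0 ≤ A t := fun t ht => by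
      linarith [hcone t ht, hC h0 ht ht.1]
    have hCup : ∀ t ∈ s, C t ≤ A 0 := fun t ht => by
      linarith [hcone t ht, hA h0 ht ht.1, (hmax.1 t ht).1.2.2]
    have limA := (hA.mono hsub).tendsto_nhdsWithin_Ioo_left hne
      ⟨3 * C 0, by rintro _ ⟨t, ht, rfl⟩; exact hAlow t (hsub ht)⟩
    have limB := (hB.mono hsub).tendsto_nhdsWithin_Ioo_left hne
      ⟨B 0 / C 0 * A 0, by rintro _ ⟨t, ht, rfl⟩; exact hBle t (hsub ht)⟩
    have limC := (hC.mono hsub).tendsto_nhdsWithin_Ioo_left hne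
      ⟨A 0, by rintro _ ⟨t, ht, rfl⟩; exact hCup t (hsub ht)⟩
    obtain ⟨-, hB0', hC0'⟩ := (hmax.1 0 h0).1
    refine hmax.not_tendsto hτ ?_ ?_ ?_ limA limB limC
    · refine lt_of_lt_of_le (by positivity : 0 < 3 * C 0) (ge_of_tendsto limA ?_)
      filter_upwards [hmem] with t ht using hAlow t (hsub ht)
    · refine lt_of_lt_of_le hB0' (ge_of_tendsto limB ?_)
      filter_upwards [hmem] with t ht using hB h0 (hsub ht) ht.1.le
    · refine lt_of_lt_of_le hC0' (ge_of_tendsto limC ?_)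
      filter_upwards [hmem] with t ht using hC h0 (hsub ht) ht.1.le
end

section
/- For all real numbers A ≥ B ≥ C > 0, the quantities Y = 3B^2 - (A-C)^2 - 2AB - 2BC and Z = 3C^2 - (A-B)^2 - 2BC - 2AC satisfy Y ≤ -C^2 < 0 and Z ≤ -C^2 < 0. -/
/-- For `A ≥ B ≥ C > 0`, the quantities `Y = 3B² - (A-C)² - 2AB - 2BC` and
`Z = 3C² - (A-B)² - 2BC - 2AC` appearing in the `SU(2)` cross curvature tensor satisfy
`Y ≤ -C² < 0` and `Z ≤ -C² < 0`. -/
theorem su2_YZ_negative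
    (A B C : ℝ) (hC : 0 < C) (hBC : B ≥ C) (hAB : A ≥ B) :
    (3 * B ^ 2 - (A - C) ^ 2 - 2 * A * B - 2 * B * C ≤ -C ^ 2 ∧
      3 * C ^ 2 - (A - B) ^ 2 - 2 * B * C - 2 * A * C ≤ -C ^ 2) ∧
    -C ^ 2 < 0 := by
  have hB : 0 < B := hC.trans_le hBC
  have ht : 0 ≤ A - B := sub_nonneg.mpr hAB
  have hs : 0 ≤ B - C := sub_nonneg.mpr hBC
  refine ⟨⟨?_, ?_⟩, by nlinarith [pow_pos hC 2]⟩
  -- `Y + C² = -(A - B)² - 2 B (A - B) - 2 (A - B) (B - C)`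
  · linarith [sq_nonneg (A - B), mul_nonneg hB.le ht, mul_nonneg ht hs]
  -- `Z + C² = -(A - B)² - 2 C (A - B) - 4 C (B - C)`
  · linarith [sq_nonneg (A - B), mul_nonneg hC.le ht, mul_nonneg hC.le hs]
end

section
/- Let A, B, C be positive differentiable functions on [0, T) solving the SU(2) negative cross curvature flow ODE system with A_0 ≥ B_0 ≥ C_0 > 0. Then A ≥ B ≥ C on [0, T), and the functions A, A - B, A - C, A/B and A/C are all (weakly) decreasing on [0, T). -/
/-!
The ordering and all five monotonicity claims come from factoring the right-hand sides.

Each difference of two of the unknowns satisfies a linear homogeneous equation: for instance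
`(A - B)' = (A - B) * 2Z((A + B - C)² + 4AB) / (ABC)²`, and similarly for the other pairs. The
coefficient is continuous on `[0, T)`, so by a Grönwall comparison (`nonneg_of_linear_ode`) the
signs of `A - B` and `B - C` at time `0` persist, i.e. `A ≥ B ≥ C`.

On the cone `A ≥ B ≥ C > 0` both `Y` and `Z` are negative (`su2Y_neg`, `su2Z_neg`). Hence
`A' ≤ 0`, and the coefficients for `A - B` and `A - C` are nonpositive. For the quotients,
`(A/B)'` has the sign of `-Z(Y - X)` with `Y - X = -4(A - B)(A + B - C) ≤ 0`, and `(A/C)'` that of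
`-Y(Z - X)` with `Z - X = -4(A - C)(A + C - B) ≤ 0`.
-/

/-- The quantity `X = 3A² - (B-C)² - 2AB - 2AC` of the `SU(2)` cross curvature tensor. -/
def su2X (A B C : ℝ) : ℝ := 3 * A ^ 2 - (B - C) ^ 2 - 2 * A * B - 2 * A * C

/-- The quantity `Y = 3B² - (A-C)² - 2AB - 2BC` of the `SU(2)` cross curvature tensor. -/
def su2Y (A B C : ℝ) : ℝ := 3 * B ^ 2 - (A - C) ^ 2 - 2 * A * B - 2 * B * C

/-- The quantity `Z = 3C² - (A-B)² - 2BC - 2AC` of the `SU(2)` cross curvature tensor. -/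
def su2Z (A B C : ℝ) : ℝ := 3 * C ^ 2 - (A - B) ^ 2 - 2 * B * C - 2 * A * C

/-- A solution of the linear equation `f' = g f` that starts nonnegative stays nonnegative.
Only continuity of `g` on `[0, T)` is needed: on `[0, t]` with `|g| ≤ K`, the function `-f` cannot
cross the barrier `ε * exp ((K + 1) s)`, for any `ε > 0`. -/
lemma nonneg_of_linear_ode {T : ℝ} {f g : ℝ → ℝ} (hg : ContinuousOn g (Set.Ico 0 T))
    (hf : ∀ t ∈ Set.Ico (0 : ℝ) T, HasDerivAt f (g t * f t) t) (h0 : 0 ≤ f 0) :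
    ∀ t ∈ Set.Ico (0 : ℝ) T, 0 ≤ f t := by
  intro t ht
  have hsub : Set.Icc 0 t ⊆ Set.Ico 0 T := fun s hs => ⟨hs.1, hs.2.trans_lt ht.2⟩
  obtain ⟨K, hK⟩ := isCompact_Icc.exists_bound_of_continuousOn (hg.mono hsub)
  have key : ∀ ε > 0, -f t ≤ ε * Real.exp ((K + 1) * t) := by
    intro ε hε
    have hB : ∀ x, HasDerivAt (fun s => ε * Real.exp ((K + 1) * s))
        (ε * (Real.exp ((K + 1) * x) * (K + 1))) x := fun x =>
      (((hasDerivAt_id x).const_mul (K + 1)).exp.const_mul ε).congr_deriv (by simp)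
    refine image_le_of_deriv_right_lt_deriv_boundary (f := fun s => -f s)
      (f' := fun s => -(g s * f s)) (a := 0) (b := t)
      (fun s hs => (hf s (hsub hs)).neg.continuousAt.continuousWithinAt)
      (fun s hs => (hf s (hsub ⟨hs.1, hs.2.le⟩)).neg.hasDerivWithinAt)
      ?_ hB ?_ ⟨ht.1, le_rfl⟩
    · simp only [mul_zero, Real.exp_zero]
      linarith
    · intro s hs heq
      have hgK : g s ≤ K := (le_abs_self _).trans (hK s ⟨hs.1, hs.2.le⟩)
      have hpos : 0 < ε * Real.exp ((K + 1) * s) := mul_pos hε (Real.exp_pos _)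
      rw [← mul_assoc, ← heq]
      rw [← heq] at hpos
      nlinarith [mul_nonneg hpos.le (sub_nonneg.2 hgK)]
  by_contra hneg
  push Not at hneg
  have he := Real.exp_pos ((K + 1) * t)
  have h := key (-f t / (2 * Real.exp ((K + 1) * t))) (div_pos (by linarith) (by positivity))
  have heq : -f t / (2 * Real.exp ((K + 1) * t)) * Real.exp ((K + 1) * t) = -f t / 2 := by
    field_simp
  linarith

lemma antitoneOn_Ico_of_hasDerivAt {T : ℝ} {f f' : ℝ → ℝ}
    (hf : ∀ t ∈ Set.Ico (0 : ℝ) T, HasDerivAt f (f' t) t)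
    (hf' : ∀ t ∈ Set.Ico (0 : ℝ) T, f' t ≤ 0) : AntitoneOn f (Set.Ico 0 T) := by
  refine antitoneOn_of_deriv_nonpos (convex_Ico 0 T)
    (fun t ht => (hf t ht).continuousAt.continuousWithinAt)
    (fun t ht => (hf t (interior_subset ht)).differentiableAt.differentiableWithinAt) ?_
  intro t ht
  rw [(hf t (interior_subset ht)).deriv]
  exact hf' t (interior_subset ht)

lemma su2Y_neg {a b c : ℝ} (hc : 0 < c) (hbc : c ≤ b) (hab : b ≤ a) : su2Y a b c < 0 := by
  unfold su2Y
  nlinarith [mul_nonneg (sub_nonneg.2 hab) (sub_nonneg.2 hbc), sq_nonneg (a - b), mul_pos hc hc,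
    mul_nonneg (sub_nonneg.2 hab) (hc.le.trans hbc)]

lemma su2Z_neg {a b c : ℝ} (hc : 0 < c) (hbc : c ≤ b) (hab : b ≤ a) : su2Z a b c < 0 := by
  unfold su2Z
  nlinarith [sq_nonneg (a - b), mul_pos hc hc, mul_nonneg hc.le (sub_nonneg.2 hbc),
    mul_nonneg hc.le (sub_nonneg.2 hab)]

/-- Along a positive solution of the `SU(2)` negative cross curvature flow ODE system on
`[0, T)` with `A0 ≥ B0 ≥ C0 > 0`: the ordering `A ≥ B ≥ C` is preserved and the
quantities `A`, `A - B`, `A - C`, `A/B`, `A/C` are all (weakly) decreasing. -/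
theorem su2_monotone_quantities
    (T A0 B0 C0 : ℝ) (hT : 0 < T)
    (hC0 : 0 < C0) (hBC0 : B0 ≥ C0) (hAB0 : A0 ≥ B0)
    (A B C : ℝ → ℝ)
    (hinitA : A 0 = A0) (hinitB : B 0 = B0) (hinitC : C 0 = C0)
    (hsol : ∀ t ∈ Set.Ico (0 : ℝ) T,
      (0 < A t ∧ 0 < B t ∧ 0 < C t) ∧
      HasDerivAt A
        (-2 * A t * su2Y (A t) (B t) (C t) * su2Z (A t) (B t) (C t) /
          (A t * B t * C t) ^ 2) t ∧
      HasDerivAt B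
        (-2 * B t * su2Z (A t) (B t) (C t) * su2X (A t) (B t) (C t) /
          (A t * B t * C t) ^ 2) t ∧
      HasDerivAt C
        (-2 * C t * su2X (A t) (B t) (C t) * su2Y (A t) (B t) (C t) /
          (A t * B t * C t) ^ 2) t) :
    (∀ t ∈ Set.Ico (0 : ℝ) T, A t ≥ B t ∧ B t ≥ C t) ∧
    AntitoneOn A (Set.Ico (0 : ℝ) T) ∧
    AntitoneOn (fun t => A t - B t) (Set.Ico (0 : ℝ) T) ∧
    AntitoneOn (fun t => A t - C t) (Set.Ico (0 : ℝ) T) ∧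
    AntitoneOn (fun t => A t / B t) (Set.Ico (0 : ℝ) T) ∧
    AntitoneOn (fun t => A t / C t) (Set.Ico (0 : ℝ) T) := by
  have hcA : ContinuousOn A (Set.Ico 0 T) := fun t ht =>
    (hsol t ht).2.1.continuousAt.continuousWithinAt
  have hcB : ContinuousOn B (Set.Ico 0 T) := fun t ht =>
    (hsol t ht).2.2.1.continuousAt.continuousWithinAt
  have hcC : ContinuousOn C (Set.Ico 0 T) := fun t ht =>
    (hsol t ht).2.2.2.continuousAt.continuousWithinAt
  have hD : ∀ t ∈ Set.Ico (0 : ℝ) T, (A t * B t * C t) ^ 2 ≠ 0 := by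
    intro t ht
    obtain ⟨⟨ha, hb, hc⟩, -⟩ := hsol t ht
    positivity
  -- The factorization behind this is `AY - BX = -(A - B)((A + B - C)² + 4AB)`, and its permutations.
  have hdAB : ∀ t ∈ Set.Ico (0 : ℝ) T, HasDerivAt (fun t => A t - B t)
      (2 * su2Z (A t) (B t) (C t) * ((A t + B t - C t) ^ 2 + 4 * A t * B t)
        / (A t * B t * C t) ^ 2 * (A t - B t)) t := by
    intro t ht
    obtain ⟨-, hA, hB, -⟩ := hsol t ht
    refine (hA.sub hB).congr_deriv ?_
    simp only [su2X, su2Y]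
    ring
  have hdAC : ∀ t ∈ Set.Ico (0 : ℝ) T, HasDerivAt (fun t => A t - C t)
      (2 * su2Y (A t) (B t) (C t) * ((A t + C t - B t) ^ 2 + 4 * A t * C t)
        / (A t * B t * C t) ^ 2 * (A t - C t)) t := by
    intro t ht
    obtain ⟨-, hA, -, hC⟩ := hsol t ht
    refine (hA.sub hC).congr_deriv ?_
    simp only [su2X, su2Z]
    ring
  have hdBC : ∀ t ∈ Set.Ico (0 : ℝ) T, HasDerivAt (fun t => B t - C t)
      (2 * su2X (A t) (B t) (C t) * ((B t + C t - A t) ^ 2 + 4 * B t * C t)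
        / (A t * B t * C t) ^ 2 * (B t - C t)) t := by
    intro t ht
    obtain ⟨-, -, hB, hC⟩ := hsol t ht
    refine (hB.sub hC).congr_deriv ?_
    simp only [su2Y, su2Z]
    ring
  have hAB : ∀ t ∈ Set.Ico (0 : ℝ) T, 0 ≤ A t - B t := by
    refine nonneg_of_linear_ode (ContinuousOn.div ?_ (by fun_prop) hD) hdAB (by linarith)
    unfold su2Z
    fun_prop
  have hBC : ∀ t ∈ Set.Ico (0 : ℝ) T, 0 ≤ B t - C t := by
    refine nonneg_of_linear_ode (ContinuousOn.div ?_ (by fun_prop) hD) hdBC (by linarith)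
    unfold su2X
    fun_prop
  have hY : ∀ t ∈ Set.Ico (0 : ℝ) T, su2Y (A t) (B t) (C t) < 0 := fun t ht =>
    su2Y_neg (hsol t ht).1.2.2 (sub_nonneg.1 (hBC t ht)) (sub_nonneg.1 (hAB t ht))
  have hZ : ∀ t ∈ Set.Ico (0 : ℝ) T, su2Z (A t) (B t) (C t) < 0 := fun t ht =>
    su2Z_neg (hsol t ht).1.2.2 (sub_nonneg.1 (hBC t ht)) (sub_nonneg.1 (hAB t ht))
  refine ⟨fun t ht => ⟨sub_nonneg.1 (hAB t ht), sub_nonneg.1 (hBC t ht)⟩, ?_, ?_, ?_, ?_, ?_⟩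
  · refine antitoneOn_Ico_of_hasDerivAt (fun t ht => (hsol t ht).2.1) fun t ht => ?_
    refine div_nonpos_of_nonpos_of_nonneg ?_ (sq_nonneg _)
    nlinarith [mul_pos (hsol t ht).1.1 (mul_pos_of_neg_of_neg (hY t ht) (hZ t ht))]
  · refine antitoneOn_Ico_of_hasDerivAt hdAB fun t ht => ?_
    obtain ⟨⟨ha, hb, hc⟩, -⟩ := hsol t ht
    refine mul_nonpos_of_nonpos_of_nonneg
      (div_nonpos_of_nonpos_of_nonneg ?_ (sq_nonneg _)) (hAB t ht)
    exact mul_nonpos_of_nonpos_of_nonneg (by linarith [hZ t ht]) (by positivity)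
  · refine antitoneOn_Ico_of_hasDerivAt hdAC fun t ht => ?_
    obtain ⟨⟨ha, hb, hc⟩, -⟩ := hsol t ht
    refine mul_nonpos_of_nonpos_of_nonneg
      (div_nonpos_of_nonpos_of_nonneg ?_ (sq_nonneg _)) (by linarith [hAB t ht, hBC t ht])
    exact mul_nonpos_of_nonpos_of_nonneg (by linarith [hY t ht]) (by positivity)
  · have hd : ∀ t ∈ Set.Ico (0 : ℝ) T, HasDerivAt (fun t => A t / B t)
        (8 * A t * su2Z (A t) (B t) (C t) * ((A t - B t) * (A t + (B t - C t)))
          / (B t * (A t * B t * C t) ^ 2)) t := by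
      intro t ht
      obtain ⟨⟨ha, hb, hc⟩, hA, hB, -⟩ := hsol t ht
      refine (hA.div hB hb.ne').congr_deriv ?_
      simp only [su2X, su2Y]
      field_simp
      ring
    refine antitoneOn_Ico_of_hasDerivAt hd fun t ht => ?_
    obtain ⟨⟨ha, hb, hc⟩, -⟩ := hsol t ht
    refine div_nonpos_of_nonpos_of_nonneg (mul_nonpos_of_nonpos_of_nonneg ?_ ?_) (by positivity)
    · exact mul_nonpos_of_nonneg_of_nonpos (by positivity) (hZ t ht).le
    · exact mul_nonneg (hAB t ht) (add_nonneg ha.le (hBC t ht))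
  · have hd : ∀ t ∈ Set.Ico (0 : ℝ) T, HasDerivAt (fun t => A t / C t)
        (8 * A t * su2Y (A t) (B t) (C t) * ((A t - C t) * (C t + (A t - B t)))
          / (C t * (A t * B t * C t) ^ 2)) t := by
      intro t ht
      obtain ⟨⟨ha, hb, hc⟩, hA, -, hC⟩ := hsol t ht
      refine (hA.div hC hc.ne').congr_deriv ?_
      simp only [su2X, su2Z]
      field_simp
      ring
    refine antitoneOn_Ico_of_hasDerivAt hd fun t ht => ?_
    obtain ⟨⟨ha, hb, hc⟩, -⟩ := hsol t ht
    refine div_nonpos_of_nonpos_of_nonneg (mul_nonpos_of_nonpos_of_nonneg ?_ ?_) (by positivity)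
    · exact mul_nonpos_of_nonneg_of_nonpos (by positivity) (hY t ht).le
    · exact mul_nonneg (by linarith [hAB t ht, hBC t ht]) (add_nonneg hc.le (hAB t ht))
end

section
/- For any initial data A_0, B_0, C_0 > 0, there exists a finite time T_0 > 0 such that the SU(2) negative cross curvature flow ODE system has a positive solution on [0, T_0), which is maximal; moreover, as t → T_0^-, A(t)/(2 sqrt(T_0 - t)) → 1, B(t)/(2 sqrt(T_0 - t)) → 1 and C(t)/(2 sqrt(T_0 - t)) → 1. -/
/-- A triple of functions solves the `SU(2)` negative cross curvature flow ODE system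
(with positivity) on a set `s ⊆ ℝ`. -/
def IsSolSU2 (A B C : ℝ → ℝ) (s : Set ℝ) : Prop :=
  ∀ t ∈ s,
    (0 < A t ∧ 0 < B t ∧ 0 < C t) ∧
    HasDerivAt A
      (-2 * A t * su2Y (A t) (B t) (C t) * su2Z (A t) (B t) (C t) /
        (A t * B t * C t) ^ 2) t ∧
    HasDerivAt B
      (-2 * B t * su2Z (A t) (B t) (C t) * su2X (A t) (B t) (C t) /
        (A t * B t * C t) ^ 2) t ∧
    HasDerivAt C
      (-2 * C t * su2X (A t) (B t) (C t) * su2Y (A t) (B t) (C t) /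
        (A t * B t * C t) ^ 2) t

/-- A maximal solution of the `SU(2)` system on `{t | 0 ≤ t, t < T}` (`T ∈ (0,∞]` an
extended real): it is a solution that admits no extension to a strictly larger interval. -/
def IsMaxSolSU2 (A B C : ℝ → ℝ) (T : EReal) : Prop :=
  IsSolSU2 A B C {t : ℝ | 0 ≤ t ∧ (t : EReal) < T} ∧
  ∀ (A' B' C' : ℝ → ℝ) (T' : EReal), T < T' →
    IsSolSU2 A' B' C' {t : ℝ | 0 ≤ t ∧ (t : EReal) < T'} →
    ¬ (∀ t : ℝ, 0 ≤ t → (t : EReal) < T → A' t = A t ∧ B' t = B t ∧ C' t = C t)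

open Filter Topology

/-! ### Global existence in rescaled time -/

/-- A bounded `C¹` vector field on a finite-dimensional space is complete: with `‖v‖ ≤ L`,
Picard–Lindelöf applies on the ball of radius `L * a` and gives a solution on `(-a, a)`, for every
`a`. -/
theorem exists_global_integral_curve {E : Type*} [NormedAddCommGroup E] [NormedSpace ℝ E]
    [FiniteDimensional ℝ E] (v : E → E) (hv : ContDiff ℝ 1 v) (L : NNReal)
    (hL : ∀ x, ‖v x‖ ≤ L) (x : E) :
    ∃ γ : ℝ → E, γ 0 = x ∧ ∀ t, HasDerivAt γ (v (γ t)) t := by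
  have := FiniteDimensional.complete ℝ E
  have := FiniteDimensional.proper ℝ E
  have hv' : ContMDiff (modelWithCornersSelf ℝ E) (modelWithCornersSelf ℝ E).tangent 1
      (fun x => (⟨x, v x⟩ : TangentBundle (modelWithCornersSelf ℝ E) E)) :=
    contMDiff_vectorSpace_iff_contDiff.2 hv
  obtain ⟨γ, h0, h⟩ :=
    (exists_isMIntegralCurve_iff_exists_isMIntegralCurveOn_Ioo
      (I := modelWithCornersSelf ℝ E) (v := v) hv' x).2 (by
      intro a
      rcases le_or_gt a 0 with ha | ha
      · refine ⟨fun _ => x, rfl, ?_⟩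
        rw [Set.Ioo_eq_empty (by linarith)]
        intro t ht
        exact ht.elim
      have hcomp : IsCompact (Metric.closedBall x ((L * ⟨a, ha.le⟩ : NNReal) : ℝ)) :=
        isCompact_closedBall _ _
      obtain ⟨K, hK⟩ :=
        (hv.locallyLipschitz.locallyLipschitzOn).exists_lipschitzOnWith_of_compact hcomp
      have hPL : IsPicardLindelof (fun _ => v) (tmin := -a) (tmax := a)
          ⟨0, by constructor <;> linarith⟩ x (L * ⟨a, ha.le⟩) 0 L K :=
        IsPicardLindelof.of_time_independent (fun y _ => hL y) hK (by simp; exact le_rfl)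
      obtain ⟨α, hα0, hα⟩ := hPL.exists_eq_forall_mem_Icc_hasDerivWithinAt₀
      refine ⟨α, hα0, fun t ht => ?_⟩
      exact ((hα t ⟨ht.1.le, ht.2.le⟩).mono Set.Ioo_subset_Icc_self)
        |>.hasFDerivWithinAt.hasMFDerivWithinAt)
  refine ⟨γ, h0, fun t => ?_⟩
  have h1 : HasFDerivAt γ ((1 : ℝ →L[ℝ] ℝ).smulRight (v (γ t))) t := (h t).hasFDerivAt
  simpa using h1.hasDerivAt


/-- Positive global solutions of the flow in the rescaled time `s`, related to the original time
`t` by `dt/ds = (ABC)² / (A + B + C)⁴`. The logarithmic derivatives are homogeneous of degree zero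
in `(A, B, C)`. -/
structure RescaledFlow (A B C : ℝ → ℝ) : Prop where
  posA : ∀ s, 0 < A s
  posB : ∀ s, 0 < B s
  posC : ∀ s, 0 < C s
  derA : ∀ s, HasDerivAt A (A s * (-2 * su2Y (A s) (B s) (C s) * su2Z (A s) (B s) (C s) /
        (A s + B s + C s) ^ 4)) s
  derB : ∀ s, HasDerivAt B (B s * (-2 * su2Z (A s) (B s) (C s) * su2X (A s) (B s) (C s) /
        (A s + B s + C s) ^ 4)) s
  derC : ∀ s, HasDerivAt C (C s * (-2 * su2X (A s) (B s) (C s) * su2Y (A s) (B s) (C s) /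
        (A s + B s + C s) ^ 4)) s

/-- In the coordinates `(log A, log B, log C)` the rescaled vector field is smooth and bounded on
all of `ℝ³`, hence complete. -/
theorem exists_rescaled_flow (A0 B0 C0 : ℝ) (hA0 : 0 < A0) (hB0 : 0 < B0) (hC0 : 0 < C0) :
    ∃ A B C : ℝ → ℝ, A 0 = A0 ∧ B 0 = B0 ∧ C 0 = C0 ∧ RescaledFlow A B C := by
  let v : ℝ × ℝ × ℝ → ℝ × ℝ × ℝ := fun p =>
    let a := Real.exp p.1
    let b := Real.exp p.2.1
    let c := Real.exp p.2.2
    (-2 * su2Y a b c * su2Z a b c / (a + b + c) ^ 4,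
      -2 * su2Z a b c * su2X a b c / (a + b + c) ^ 4,
      -2 * su2X a b c * su2Y a b c / (a + b + c) ^ 4)
  have hv : ContDiff ℝ 1 v := by
    have hne : ∀ p : ℝ × ℝ × ℝ,
        (Real.exp p.1 + Real.exp p.2.1 + Real.exp p.2.2) ^ 4 ≠ 0 := fun p => by positivity
    simp only [v, su2X, su2Y, su2Z]
    refine ContDiff.prodMk ?_ (ContDiff.prodMk ?_ ?_) <;>
      exact ContDiff.div (by fun_prop) (by fun_prop) hne
  have key : ∀ x y s : ℝ, 0 < s → |x| ≤ 3 * s ^ 2 → |y| ≤ 3 * s ^ 2 →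
      ‖-2 * x * y / s ^ 4‖ ≤ (18 : NNReal) := by
    intro x y s hs hx hy
    have : |x| * |y| ≤ (3 * s ^ 2) * (3 * s ^ 2) := by gcongr
    rw [Real.norm_eq_abs, abs_div, abs_mul, abs_mul, abs_of_pos (show 0 < s ^ 4 by positivity),
      div_le_iff₀ (by positivity)]
    norm_num
    nlinarith
  have bX : ∀ a b c : ℝ, 0 < a → 0 < b → 0 < c →
      |3 * a ^ 2 - (b - c) ^ 2 - 2 * a * b - 2 * a * c| ≤ 3 * (a + b + c) ^ 2 := by
    intro a b c ha hb hc
    have := mul_pos ha hb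
    have := mul_pos ha hc
    have := mul_pos hb hc
    rw [abs_le]
    constructor <;> nlinarith [sq_nonneg (b - c), sq_nonneg b, sq_nonneg c, sq_nonneg a]
  have hL : ∀ p, ‖v p‖ ≤ (18 : NNReal) := by
    intro p
    have ha := Real.exp_pos p.1
    have hb := Real.exp_pos p.2.1
    have hc := Real.exp_pos p.2.2
    have h1 : |su2X (Real.exp p.1) (Real.exp p.2.1) (Real.exp p.2.2)| ≤
        3 * (Real.exp p.1 + Real.exp p.2.1 + Real.exp p.2.2) ^ 2 := bX _ _ _ ha hb hc
    have h2 : |su2Y (Real.exp p.1) (Real.exp p.2.1) (Real.exp p.2.2)| ≤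
        3 * (Real.exp p.1 + Real.exp p.2.1 + Real.exp p.2.2) ^ 2 := by
      convert bX _ _ _ hb ha hc using 1
      · rw [su2Y]; ring_nf
      · ring
    have h3 : |su2Z (Real.exp p.1) (Real.exp p.2.1) (Real.exp p.2.2)| ≤
        3 * (Real.exp p.1 + Real.exp p.2.1 + Real.exp p.2.2) ^ 2 := by
      convert bX _ _ _ hc ha hb using 1
      · rw [su2Z]; ring_nf
      · ring
    have hs : 0 < Real.exp p.1 + Real.exp p.2.1 + Real.exp p.2.2 := by positivity
    exact norm_prod_le_iff.2 ⟨key _ _ _ hs h2 h3,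
      norm_prod_le_iff.2 ⟨key _ _ _ hs h3 h1, key _ _ _ hs h1 h2⟩⟩
  obtain ⟨γ, h0, hγ⟩ :=
    exists_global_integral_curve v hv 18 hL (Real.log A0, Real.log B0, Real.log C0)
  refine ⟨fun s => Real.exp (γ s).1, fun s => Real.exp (γ s).2.1, fun s => Real.exp (γ s).2.2,
    by simp [h0, Real.exp_log hA0], by simp [h0, Real.exp_log hB0], by simp [h0, Real.exp_log hC0],
    ⟨fun _ => Real.exp_pos _, fun _ => Real.exp_pos _, fun _ => Real.exp_pos _, ?_, ?_, ?_⟩⟩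
  · exact fun s => HasDerivAt.exp (f := fun s => (γ s).1) (hγ s).fst
  · exact fun s => HasDerivAt.exp (f := fun s => (γ s).2.1) (hγ s).snd.fst
  · exact fun s => HasDerivAt.exp (f := fun s => (γ s).2.2) (hγ s).snd.snd

/-! ### Preservation of the ordering and monotonicity of `A / C` -/

theorem nonneg_of_linear_ode_s11 {f h : ℝ → ℝ} (hh : Continuous h)
    (hf : ∀ s, HasDerivAt f (h s * f s) s) (h0 : 0 ≤ f 0) (s : ℝ) : 0 ≤ f s := by
  have hd : ∀ s, HasDerivAt (fun s => f s * Real.exp (-∫ x in (0 : ℝ)..s, h x)) 0 s := by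
    intro s
    have h1 := (hh.integral_hasStrictDerivAt 0 s).hasDerivAt
    exact ((hf s).mul h1.neg.exp).congr_deriv (by simp; ring)
  have hc := is_const_of_deriv_eq_zero (fun s => (hd s).differentiableAt)
    (fun s => (hd s).deriv) s 0
  simp only [intervalIntegral.integral_same, neg_zero, Real.exp_zero, mul_one] at hc
  exact nonneg_of_mul_nonneg_left (hc ▸ h0) (Real.exp_pos _)

theorem le_initial_of_deriv_nonpos {f f' : ℝ → ℝ} (hf : ∀ s, HasDerivAt f (f' s) s)
    (hf' : ∀ s, 0 ≤ s → f' s ≤ 0) (s : ℝ) (hs : 0 ≤ s) : f s ≤ f 0 := by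
  have h : AntitoneOn f (Set.Ici 0) := by
    refine antitoneOn_of_deriv_nonpos (convex_Ici 0)
      (fun s _ => (hf s).continuousAt.continuousWithinAt)
      (fun s _ => (hf s).differentiableAt.differentiableWithinAt) (fun s hs => ?_)
    rw [interior_Ici] at hs
    rw [(hf s).deriv]
    exact hf' s (le_of_lt hs)
  exact h Set.self_mem_Ici hs hs

theorem su2Y_le {A B C : ℝ} (hC : 0 < C) (hBC : C ≤ B) (hAB : B ≤ A) :
    su2Y A B C ≤ -C ^ 2 := by
  rw [su2Y]
  nlinarith [mul_nonneg (sub_nonneg.2 hAB) (show 0 ≤ A + 3 * B - 2 * C by linarith)]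

theorem su2Z_le {A B C : ℝ} (hC : 0 < C) (hBC : C ≤ B) (hAB : B ≤ A) :
    su2Z A B C ≤ -C ^ 2 := by
  rw [su2Z]
  nlinarith [sq_nonneg (A - B), mul_nonneg hC.le (sub_nonneg.2 hBC),
    mul_nonneg hC.le (sub_nonneg.2 (hBC.trans hAB))]

namespace RescaledFlow

theorem contA {A B C : ℝ → ℝ} (F : RescaledFlow A B C) : Continuous A :=
  continuous_iff_continuousAt.2 fun s => (F.derA s).continuousAt

theorem contB {A B C : ℝ → ℝ} (F : RescaledFlow A B C) : Continuous B :=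
  continuous_iff_continuousAt.2 fun s => (F.derB s).continuousAt

theorem contC {A B C : ℝ → ℝ} (F : RescaledFlow A B C) : Continuous C :=
  continuous_iff_continuousAt.2 fun s => (F.derC s).continuousAt

theorem sum_pow_ne {A B C : ℝ → ℝ} (F : RescaledFlow A B C)
    (s : ℝ) : (A s + B s + C s) ^ 4 ≠ 0 := by
  have := F.posA s
  have := F.posB s
  have := F.posC s
  positivity

/-- `A - B` satisfies a linear homogeneous equation, so its sign is preserved. -/
theorem le_AB {A B C : ℝ → ℝ} (F : RescaledFlow A B C) (h0 : B 0 ≤ A 0) (s : ℝ) : B s ≤ A s := by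
  have hA := F.contA
  have hB := F.contB
  have hC := F.contC
  refine sub_nonneg.1 (nonneg_of_linear_ode_s11 (f := fun s => A s - B s)
    (h := fun s => 2 * su2Z (A s) (B s) (C s) * (6 * A s * B s + A s ^ 2 + B s ^ 2
      - 2 * C s * (A s + B s) + C s ^ 2) / (A s + B s + C s) ^ 4) ?_ ?_ (sub_nonneg.2 h0) s)
  · simp only [su2Z]
    exact Continuous.div (by fun_prop) (by fun_prop) F.sum_pow_ne
  · intro s
    refine ((F.derA s).sub (F.derB s)).congr_deriv ?_
    simp only [su2X, su2Y]
    ring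

theorem le_BC {A B C : ℝ → ℝ} (F : RescaledFlow A B C) (h0 : C 0 ≤ B 0) (s : ℝ) : C s ≤ B s := by
  have hA := F.contA
  have hB := F.contB
  have hC := F.contC
  refine sub_nonneg.1 (nonneg_of_linear_ode_s11 (f := fun s => B s - C s)
    (h := fun s => 2 * su2X (A s) (B s) (C s) * (6 * B s * C s + B s ^ 2 + C s ^ 2
      - 2 * A s * (B s + C s) + A s ^ 2) / (A s + B s + C s) ^ 4) ?_ ?_ (sub_nonneg.2 h0) s)
  · simp only [su2X]
    exact Continuous.div (by fun_prop) (by fun_prop) F.sum_pow_ne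
  · intro s
    refine ((F.derB s).sub (F.derC s)).congr_deriv ?_
    simp only [su2Z, su2Y]
    ring

/-- The linear equation satisfied by `A / C - 1`, from `Z - X = 4 (C - A) (A + C - B)`. For ordered
data its coefficient is negative because `Y < 0`. -/
theorem der_ratio {A B C : ℝ → ℝ} (F : RescaledFlow A B C)
    (s : ℝ) : HasDerivAt (fun s => A s / C s - 1)
    (8 * su2Y (A s) (B s) (C s) * A s * (A s + C s - B s) / (A s + B s + C s) ^ 4 *
      (A s / C s - 1)) s := by
  have hC := (F.posC s).ne'
  have hS := F.sum_pow_ne s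
  refine (((F.derA s).div (F.derC s) hC).sub_const 1).congr_deriv ?_
  rw [show A s / C s - 1 = (A s - C s) / C s by field_simp]
  generalize (A s + B s + C s) ^ 4 = S at hS ⊢
  have key : su2Z (A s) (B s) (C s) - su2X (A s) (B s) (C s) =
      4 * (C s - A s) * (A s + C s - B s) := by
    simp only [su2X, su2Z]; ring
  have : su2Z (A s) (B s) (C s) = su2X (A s) (B s) (C s) +
      4 * (C s - A s) * (A s + C s - B s) := by linarith
  rw [this]
  field_simp
  ring

theorem le_mul_C {A B C : ℝ → ℝ} (F : RescaledFlow A B C)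
    (h1 : B 0 ≤ A 0) (h2 : C 0 ≤ B 0) (s : ℝ) (hs : 0 ≤ s) :
    A s ≤ A 0 / C 0 * C s := by
  have h := le_initial_of_deriv_nonpos F.der_ratio (fun s _ => ?_) s hs
  · rw [← div_le_iff₀ (F.posC s)]
    linarith
  · have hAB := F.le_AB h1 s
    have hBC := F.le_BC h2 s
    have hC := F.posC s
    have hA := F.posA s
    have hY : su2Y (A s) (B s) (C s) ≤ 0 := (su2Y_le hC hBC hAB).trans (by nlinarith)
    have hr : 0 ≤ A s / C s - 1 := by
      rw [sub_nonneg, one_le_div hC]; linarith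
    have hS : 0 ≤ (A s + B s + C s) ^ 4 := by positivity
    have e : 0 ≤ A s * (A s + C s - B s) * (A s / C s - 1) / (A s + B s + C s) ^ 4 :=
      div_nonneg (mul_nonneg (mul_nonneg hA.le (by linarith)) hr) hS
    calc _ = 8 * su2Y (A s) (B s) (C s) *
          (A s * (A s + C s - B s) * (A s / C s - 1) / (A s + B s + C s) ^ 4) := by ring
      _ ≤ 0 := mul_nonpos_of_nonpos_of_nonneg (by linarith) e

end RescaledFlow

/-! ### Decay and limits for ordered data -/

namespace RescaledFlow

/-- `A / C - 1` decays exponentially: the bound `A ≤ K C` with `K = A(0) / C(0)` keeps its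
logarithmic derivative below `-8 / (81 K³)`, where `81` comes from `(A + B + C)⁴ ≤ 81 A⁴`. -/
theorem ratio_sub_one_le {A B C : ℝ → ℝ} (F : RescaledFlow A B C)
    (h1 : B 0 ≤ A 0) (h2 : C 0 ≤ B 0) (s : ℝ) (hs : 0 ≤ s) :
    (A s / C s - 1) * Real.exp (8 / (81 * (A 0 / C 0) ^ 3) * s) ≤ A 0 / C 0 - 1 := by
  set K := A 0 / C 0 with hK
  have hKpos : 0 < K := div_pos (F.posA 0) (F.posC 0)
  have hd : ∀ s, HasDerivAt (fun s => (A s / C s - 1) * Real.exp (8 / (81 * K ^ 3) * s)) _ s :=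
    fun s => (F.der_ratio s).mul (((hasDerivAt_id s).const_mul (8 / (81 * K ^ 3))).exp)
  have h := le_initial_of_deriv_nonpos hd (fun s hs => ?_) s hs
  · simpa using h
  · have hAB := F.le_AB h1 s
    have hBC := F.le_BC h2 s
    have hC := F.posC s
    have hA := F.posA s
    have hB := F.posB s
    have hAK : A s ≤ K * C s := F.le_mul_C h1 h2 s hs
    have hY := su2Y_le hC hBC hAB
    have hr : 0 ≤ A s / C s - 1 := by
      rw [sub_nonneg, one_le_div hC]; linarith
    have hg : 8 * su2Y (A s) (B s) (C s) * A s * (A s + C s - B s) / (A s + B s + C s) ^ 4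
        ≤ -(8 / (81 * K ^ 3)) := by
      rw [div_le_iff₀ (by positivity)]
      have e1 : (A s + B s + C s) ^ 4 ≤ (3 * A s) ^ 4 := by gcongr; linarith
      have e2 : A s ^ 3 ≤ (K * C s) ^ 3 := by gcongr
      have e3 : 8 / (81 * K ^ 3) * (A s + B s + C s) ^ 4 ≤ 8 * A s * C s ^ 3 := by
        calc _ ≤ 8 / (81 * K ^ 3) * (3 * A s) ^ 4 := by gcongr
          _ = 8 * A s / K ^ 3 * A s ^ 3 := by field_simp; ring
          _ ≤ 8 * A s / K ^ 3 * (K * C s) ^ 3 := by gcongr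
          _ = _ := by field_simp
      have e4 : C s ^ 2 * C s ≤ (-su2Y (A s) (B s) (C s)) * (A s + C s - B s) := by
        gcongr
        · nlinarith
        · linarith
        · linarith
      have e5 := mul_le_mul_of_nonneg_left e4 hA.le
      nlinarith
    have hE := Real.exp_pos (8 / (81 * K ^ 3) * s)
    have hrE := mul_nonneg hr hE.le
    simp only [id, mul_one]
    nlinarith [mul_le_mul_of_nonneg_right hg hrE]

/-- `A` decays exponentially in rescaled time, since `Y Z ≥ C⁴ ≥ (A / K)⁴`. -/
theorem A_mul_exp_le {A B C : ℝ → ℝ} (F : RescaledFlow A B C)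
    (h1 : B 0 ≤ A 0) (h2 : C 0 ≤ B 0) (s : ℝ) (hs : 0 ≤ s) :
    A s * Real.exp (2 / (81 * (A 0 / C 0) ^ 4) * s) ≤ A 0 := by
  set K := A 0 / C 0 with hK
  have hKpos : 0 < K := div_pos (F.posA 0) (F.posC 0)
  have hd : ∀ s, HasDerivAt (fun s => A s * Real.exp (2 / (81 * K ^ 4) * s)) _ s :=
    fun s => (F.derA s).mul (((hasDerivAt_id s).const_mul (2 / (81 * K ^ 4))).exp)
  have h := le_initial_of_deriv_nonpos hd (fun s hs => ?_) s hs
  · simpa using h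
  · have hAB := F.le_AB h1 s
    have hBC := F.le_BC h2 s
    have hC := F.posC s
    have hA := F.posA s
    have hB := F.posB s
    have hAK : A s ≤ K * C s := F.le_mul_C h1 h2 s hs
    have hY := su2Y_le hC hBC hAB
    have hZ := su2Z_le hC hBC hAB
    have hg : -2 * su2Y (A s) (B s) (C s) * su2Z (A s) (B s) (C s) / (A s + B s + C s) ^ 4
        ≤ -(2 / (81 * K ^ 4)) := by
      rw [div_le_iff₀ (by positivity)]
      have e1 : (A s + B s + C s) ^ 4 ≤ (3 * A s) ^ 4 := by gcongr; linarith
      have e2 : A s ^ 4 ≤ (K * C s) ^ 4 := by gcongr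
      have e3 : 2 / (81 * K ^ 4) * (A s + B s + C s) ^ 4 ≤ 2 * C s ^ 4 := by
        calc _ ≤ 2 / (81 * K ^ 4) * (3 * A s) ^ 4 := by gcongr
          _ = 2 / K ^ 4 * A s ^ 4 := by field_simp; ring
          _ ≤ 2 / K ^ 4 * (K * C s) ^ 4 := by gcongr
          _ = _ := by field_simp
      have e4 : C s ^ 2 * C s ^ 2 ≤
          (-su2Y (A s) (B s) (C s)) * (-su2Z (A s) (B s) (C s)) := by
        gcongr
        · nlinarith
        · linarith
        · linarith
      nlinarith
    have hAE := mul_nonneg hA.le (Real.exp_pos (2 / (81 * K ^ 4) * s)).le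
    simp only [id, mul_one]
    nlinarith [mul_le_mul_of_nonneg_right hg hAE]

theorem tendsto_A {A B C : ℝ → ℝ} (F : RescaledFlow A B C)
    (h1 : B 0 ≤ A 0) (h2 : C 0 ≤ B 0) : Tendsto A atTop (𝓝 0) := by
  have hκ : 0 < 2 / (81 * (A 0 / C 0) ^ 4) := by
    have := F.posA 0
    have := F.posC 0
    positivity
  have hlim : Tendsto (fun s => A 0 / Real.exp (2 / (81 * (A 0 / C 0) ^ 4) * s)) atTop (𝓝 0) :=
    tendsto_const_nhds.div_atTop (Real.tendsto_exp_atTop.comp (tendsto_id.const_mul_atTop hκ))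
  refine tendsto_of_tendsto_of_tendsto_of_le_of_le' tendsto_const_nhds hlim
    (Eventually.of_forall fun s => (F.posA s).le) ?_
  filter_upwards [eventually_ge_atTop 0] with s hs
  rw [le_div_iff₀ (Real.exp_pos _)]
  exact F.A_mul_exp_le h1 h2 s hs

theorem tendsto_ratio_AC {A B C : ℝ → ℝ} (F : RescaledFlow A B C)
    (h1 : B 0 ≤ A 0) (h2 : C 0 ≤ B 0) :
    Tendsto (fun s => A s / C s) atTop (𝓝 1) := by
  have hδ : 0 < 8 / (81 * (A 0 / C 0) ^ 3) := by
    have := F.posA 0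
    have := F.posC 0
    positivity
  have hlim : Tendsto (fun s => 1 + (A 0 / C 0 - 1) / Real.exp (8 / (81 * (A 0 / C 0) ^ 3) * s))
      atTop (𝓝 (1 + 0)) :=
    tendsto_const_nhds.add
      (tendsto_const_nhds.div_atTop (Real.tendsto_exp_atTop.comp (tendsto_id.const_mul_atTop hδ)))
  rw [add_zero] at hlim
  refine tendsto_of_tendsto_of_tendsto_of_le_of_le' tendsto_const_nhds hlim
    (Eventually.of_forall fun s => ?_) ?_
  · rw [one_le_div (F.posC s)]
    exact (F.le_BC h2 s).trans (F.le_AB h1 s)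
  filter_upwards [eventually_ge_atTop 0] with s hs
  rw [← sub_le_iff_le_add', le_div_iff₀ (Real.exp_pos _)]
  exact F.ratio_sub_one_le h1 h2 s hs

theorem tendsto_ratio_BC {A B C : ℝ → ℝ} (F : RescaledFlow A B C)
    (h1 : B 0 ≤ A 0) (h2 : C 0 ≤ B 0) :
    Tendsto (fun s => B s / C s) atTop (𝓝 1) := by
  refine tendsto_of_tendsto_of_tendsto_of_le_of_le tendsto_const_nhds
    (F.tendsto_ratio_AC h1 h2) (fun s => ?_) (fun s => ?_)
  · exact (one_le_div (F.posC s)).2 (F.le_BC h2 s)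
  · exact div_le_div_of_nonneg_right (F.le_AB h1 s) (F.posC s).le

/-- The quantity whose limit is taken is `-d(A²)/dt` in the original time; by homogeneity it depends only on
`A / C` and `B / C`, which tend to `1`. -/
theorem tendsto_speed {A B C : ℝ → ℝ} (F : RescaledFlow A B C) (h1 : B 0 ≤ A 0) (h2 : C 0 ≤ B 0) :
    Tendsto (fun s => 4 * su2Y (A s) (B s) (C s) * su2Z (A s) (B s) (C s) / (B s * C s) ^ 2)
      atTop (𝓝 4) := by
  have hq := F.tendsto_ratio_AC h1 h2
  have hp := F.tendsto_ratio_BC h1 h2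
  have hY : Tendsto (fun s => su2Y (A s / C s) (B s / C s) 1) atTop (𝓝 (su2Y 1 1 1)) := by
    have hc : Continuous fun z : ℝ × ℝ => su2Y z.1 z.2 1 := by simp only [su2Y]; fun_prop
    have h := (hc.tendsto ((1 : ℝ), (1 : ℝ))).comp (hq.prodMk_nhds hp)
    exact h
  have hZ : Tendsto (fun s => su2Z (A s / C s) (B s / C s) 1) atTop (𝓝 (su2Z 1 1 1)) := by
    have hc : Continuous fun z : ℝ × ℝ => su2Z z.1 z.2 1 := by simp only [su2Z]; fun_prop
    have h := (hc.tendsto ((1 : ℝ), (1 : ℝ))).comp (hq.prodMk_nhds hp)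
    exact h
  have h := ((hY.const_mul 4).mul hZ).div (hp.pow 2) (by norm_num)
  have e : 4 * su2Y 1 1 1 * su2Z 1 1 1 / 1 ^ 2 = 4 := by norm_num [su2Y, su2Z]
  rw [e] at h
  refine h.congr fun s => ?_
  have hB := (F.posB s).ne'
  have hC := (F.posC s).ne'
  have eY : su2Y (A s) (B s) (C s) = C s ^ 2 * su2Y (A s / C s) (B s / C s) 1 := by
    simp only [su2Y]; field_simp
  have eZ : su2Z (A s) (B s) (C s) = C s ^ 2 * su2Z (A s / C s) (B s / C s) 1 := by
    simp only [su2Z]; field_simp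
  rw [eY, eZ]
  simp only [Pi.div_apply]
  field_simp

/-- The original time `t = φ s` as a function of the rescaled time. Its limit `T` is finite because
`A² + (4 / K²) φ` is nonincreasing, where `K = A(0) / C(0)`. -/
theorem exists_time_change {A B C : ℝ → ℝ} (F : RescaledFlow A B C)
    (h1 : B 0 ≤ A 0) (h2 : C 0 ≤ B 0) :
    ∃ (φ : ℝ → ℝ) (T : ℝ), φ 0 = 0 ∧
      (∀ s, HasStrictDerivAt φ ((A s * B s * C s) ^ 2 / (A s + B s + C s) ^ 4) s) ∧
      StrictMono φ ∧ Tendsto φ atTop (𝓝 T) := by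
  have cA := F.contA
  have cB := F.contB
  have cC := F.contC
  have hw : Continuous fun s => (A s * B s * C s) ^ 2 / (A s + B s + C s) ^ 4 :=
    Continuous.div (by fun_prop) (by fun_prop) F.sum_pow_ne
  set φ : ℝ → ℝ := fun s => ∫ x in (0 : ℝ)..s, (A x * B x * C x) ^ 2 / (A x + B x + C x) ^ 4
    with hφ
  have hφ0 : φ 0 = 0 := by simp [hφ]
  have hd : ∀ s, HasStrictDerivAt φ ((A s * B s * C s) ^ 2 / (A s + B s + C s) ^ 4) s :=
    fun s => hw.integral_hasStrictDerivAt 0 s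
  have hmono : StrictMono φ := by
    refine strictMono_of_deriv_pos fun s => ?_
    rw [(hd s).hasDerivAt.deriv]
    have := F.posA s
    have := F.posB s
    have := F.posC s
    positivity
  set K := A 0 / C 0 with hK
  have hKpos : 0 < K := div_pos (F.posA 0) (F.posC 0)
  have hbd : ∀ s, 0 ≤ s → φ s ≤ A 0 ^ 2 * K ^ 2 / 4 := by
    intro s hs
    have hd' : ∀ s, HasDerivAt (fun s => A s ^ 2 + 4 / K ^ 2 * φ s) _ s :=
      fun s => ((F.derA s).pow 2).add ((hd s).hasDerivAt.const_mul (4 / K ^ 2))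
    have h := le_initial_of_deriv_nonpos hd' (fun s hs => ?_) s hs
    · simp only [hφ0, mul_zero, add_zero] at h
      have h' : 4 / K ^ 2 * φ s ≤ A 0 ^ 2 := by nlinarith [sq_nonneg (A s)]
      rw [div_mul_eq_mul_div, div_le_iff₀ (by positivity)] at h'
      linarith
    · have hAB := F.le_AB h1 s
      have hBC := F.le_BC h2 s
      have hC := F.posC s
      have hA := F.posA s
      have hB := F.posB s
      have hAK : A s ≤ K * C s := F.le_mul_C h1 h2 s hs
      have hY := su2Y_le hC hBC hAB
      have hZ := su2Z_le hC hBC hAB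
      have e4 : C s ^ 2 * C s ^ 2 ≤
          (-su2Y (A s) (B s) (C s)) * (-su2Z (A s) (B s) (C s)) := by
        gcongr
        · nlinarith
        · linarith
        · linarith
      have e1 : 4 / K ^ 2 * (A s * B s * C s) ^ 2 ≤
          4 * A s ^ 2 * (su2Y (A s) (B s) (C s) * su2Z (A s) (B s) (C s)) := by
        calc _ = 4 / K ^ 2 * A s ^ 2 * C s ^ 2 * B s ^ 2 := by ring
          _ ≤ 4 / K ^ 2 * A s ^ 2 * C s ^ 2 * (K * C s) ^ 2 := by gcongr; linarith
          _ = 4 * A s ^ 2 * (C s ^ 2 * C s ^ 2) := by field_simp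
          _ ≤ 4 * A s ^ 2 * ((-su2Y (A s) (B s) (C s)) * (-su2Z (A s) (B s) (C s))) := by gcongr
          _ = _ := by ring
      have e2 := div_le_div_of_nonneg_right e1
        (show 0 ≤ (A s + B s + C s) ^ 4 by positivity)
      rw [mul_div_assoc] at e2
      refine le_trans (add_le_add_right e2 _) (le_of_eq ?_)
      simp
      ring
  have hbdd : BddAbove (Set.range φ) := by
    refine ⟨A 0 ^ 2 * K ^ 2 / 4, ?_⟩
    rintro _ ⟨s, rfl⟩
    exact (hmono.monotone (le_max_left s 0)).trans (hbd _ (le_max_right s 0))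
  exact ⟨φ, ⨆ s, φ s, hφ0, hd, hmono, tendsto_atTop_ciSup hmono.monotone hbdd⟩

end RescaledFlow

/-! ### Return to the original time -/

theorem tendsto_div_two_sqrt {D u : ℝ → ℝ} {l : Filter ℝ} (hD : ∀ s, 0 < D s)
    (h : Tendsto (fun s => D s ^ 2 / u s) l (𝓝 4)) :
    Tendsto (fun s => D s / (2 * Real.sqrt (u s))) l (𝓝 1) := by
  have h1 := (h.sqrt).div_const 2
  have e : Real.sqrt 4 / 2 = 1 := by
    rw [show (4 : ℝ) = 2 ^ 2 by norm_num, Real.sqrt_sq (by norm_num)]; norm_num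
  rw [e] at h1
  refine h1.congr fun s => ?_
  rw [Real.sqrt_div (sq_nonneg _), Real.sqrt_sq (hD s).le, div_div, mul_comm]

/-- The conclusion of the extinction theorem for the initial data `(A0, B0, C0)`, named so that its
invariance under permutations of the data can be stated. -/
def ExtinctionStatement (A0 B0 C0 : ℝ) : Prop :=
  ∃ (T0 : ℝ) (A B C : ℝ → ℝ), 0 < T0 ∧
    A 0 = A0 ∧ B 0 = B0 ∧ C 0 = C0 ∧
    IsMaxSolSU2 A B C (T0 : EReal) ∧
    Tendsto (fun t => A t / (2 * Real.sqrt (T0 - t))) (𝓝[<] T0) (𝓝 1) ∧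
    Tendsto (fun t => B t / (2 * Real.sqrt (T0 - t))) (𝓝[<] T0) (𝓝 1) ∧
    Tendsto (fun t => C t / (2 * Real.sqrt (T0 - t))) (𝓝[<] T0) (𝓝 1)

/-- Maximality holds because `A → 0` at `T`, while an extension would be positive and continuous
there. -/
theorem extinction_of_ordered {A0 B0 C0 : ℝ} (hA0 : 0 < A0) (hB0 : 0 < B0) (hC0 : 0 < C0)
    (hAB : B0 ≤ A0) (hBC : C0 ≤ B0) : ExtinctionStatement A0 B0 C0 := by
  obtain ⟨A, B, C, rfl, rfl, rfl, F⟩ := exists_rescaled_flow A0 B0 C0 hA0 hB0 hC0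
  obtain ⟨φ, T, hφ0, hφ, hmono, hT⟩ := F.exists_time_change hAB hBC
  have hlt : ∀ s, φ s < T := fun s =>
    (hmono (lt_add_one s)).trans_le (hmono.monotone.ge_of_tendsto hT _)
  have hφc : Continuous φ := continuous_iff_continuousAt.2 fun s => (hφ s).hasDerivAt.continuousAt
  set g : ℝ → ℝ := Function.invFun φ with hg
  have hgφ : ∀ s, g (φ s) = s := Function.leftInverse_invFun hmono.injective
  have hsurj : ∀ s₀ t, φ s₀ ≤ t → t < T → ∃ s, s₀ ≤ s ∧ φ s = t := by
    intro s₀ t h0 ht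
    obtain ⟨s₁, hs₁, hs₁'⟩ :=
      ((hT.eventually_const_lt ht).and (eventually_ge_atTop s₀)).exists
    obtain ⟨s, hs, hst⟩ := intermediate_value_Icc hs₁' hφc.continuousOn ⟨h0, hs₁.le⟩
    exact ⟨s, hs.1, hst⟩
  have hgtop : Tendsto g (𝓝[<] T) atTop := by
    refine tendsto_atTop.2 fun s₀ => ?_
    filter_upwards [Ioo_mem_nhdsLT (hlt s₀)] with t ht
    obtain ⟨s, hs, rfl⟩ := hsurj s₀ t ht.1.le ht.2
    rwa [hgφ]
  have hφg : ∀ᶠ t in 𝓝[<] T, φ (g t) = t := by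
    filter_upwards [Ioo_mem_nhdsLT (hlt 0)] with t ht
    obtain ⟨s, hs, rfl⟩ := hsurj 0 t ht.1.le ht.2
    rw [hgφ]
  have hg0 : g 0 = 0 := by rw [← hφ0, hgφ, hφ0]
  -- `g` is the inverse time change, so `D ∘ g` is `D` expressed in the original time `t = φ s`.
  have hder : ∀ (D : ℝ → ℝ) (d s : ℝ), HasDerivAt D d s →
      HasDerivAt (fun t => D (g t))
        (d * ((A s * B s * C s) ^ 2 / (A s + B s + C s) ^ 4)⁻¹) (φ s) := by
    intro D d s hD
    have hne : (A s * B s * C s) ^ 2 / (A s + B s + C s) ^ 4 ≠ 0 := by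
      have := F.posA s
      have := F.posB s
      have := F.posC s
      positivity
    have h := ((hφ s).to_local_left_inverse hne (Eventually.of_forall hgφ)).hasDerivAt
    have hD' : HasDerivAt D d (g (φ s)) := by rwa [hgφ]
    exact hD'.comp (φ s) h
  have hAlim : Tendsto (fun s => A s ^ 2 / (T - φ s)) atTop (𝓝 4) := by
    refine HasDerivAt.lhopital_zero_atTop
      (Eventually.of_forall fun s => (F.derA s).pow 2)
      (Eventually.of_forall fun s => (hφ s).hasDerivAt.const_sub T)
      (Eventually.of_forall fun s => ?_) ?_ ?_ ?_
    · have := F.posA s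
      have := F.posB s
      have := F.posC s
      exact neg_ne_zero.2 (by positivity)
    · simpa using (F.tendsto_A hAB hBC).pow 2
    · simpa using hT.const_sub T
    · refine (F.tendsto_speed hAB hBC).congr fun s => ?_
      have hA := (F.posA s).ne'
      have hB := (F.posB s).ne'
      have hC := (F.posC s).ne'
      have hS := F.sum_pow_ne s
      generalize (A s + B s + C s) ^ 4 = S at hS ⊢
      simp
      field_simp
      ring
  have hq := F.tendsto_ratio_AC hAB hBC
  have hp := F.tendsto_ratio_BC hAB hBC
  have hBlim : Tendsto (fun s => B s ^ 2 / (T - φ s)) atTop (𝓝 4) := by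
    have h := hAlim.mul ((hp.div hq one_ne_zero).pow 2)
    norm_num at h
    refine h.congr fun s => ?_
    have hA := (F.posA s).ne'
    have hC := (F.posC s).ne'
    have hTs := (sub_pos.2 (hlt s)).ne'
    field_simp
  have hClim : Tendsto (fun s => C s ^ 2 / (T - φ s)) atTop (𝓝 4) := by
    have h := hAlim.mul ((hq.inv₀ one_ne_zero).pow 2)
    norm_num at h
    refine h.congr fun s => ?_
    have hA := (F.posA s).ne'
    have hC := (F.posC s).ne'
    have hTs := (sub_pos.2 (hlt s)).ne'
    field_simp
  have hfin : ∀ D : ℝ → ℝ, (∀ s, 0 < D s) → Tendsto (fun s => D s ^ 2 / (T - φ s)) atTop (𝓝 4) →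
      Tendsto (fun t => D (g t) / (2 * Real.sqrt (T - t))) (𝓝[<] T) (𝓝 1) := by
    intro D hD h
    refine ((tendsto_div_two_sqrt hD h).comp hgtop).congr' ?_
    filter_upwards [hφg] with t ht
    simp only [Function.comp_apply, ht]
  refine ⟨T, fun t => A (g t), fun t => B (g t), fun t => C (g t), hφ0 ▸ hlt 0,
    by simp only [hg0], by simp only [hg0], by simp only [hg0], ⟨?_, ?_⟩,
    hfin A F.posA hAlim, hfin B F.posB hBlim, hfin C F.posC hClim⟩
  · rintro t ⟨ht0, htT⟩
    obtain ⟨s, -, rfl⟩ := hsurj 0 t (by rw [hφ0]; exact ht0) (by exact_mod_cast htT)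
    have hA := (F.posA s).ne'
    have hB := (F.posB s).ne'
    have hC := (F.posC s).ne'
    have hS := F.sum_pow_ne s
    simp only [hgφ]
    refine ⟨⟨F.posA s, F.posB s, F.posC s⟩, (hder A _ s (F.derA s)).congr_deriv ?_,
      (hder B _ s (F.derB s)).congr_deriv ?_, (hder C _ s (F.derC s)).congr_deriv ?_⟩
    all_goals
      generalize (A s + B s + C s) ^ 4 = S at hS ⊢
      field_simp
  · intro A' B' C' T' hTT' hsol hext
    have hT0 : 0 ≤ T := (hφ0 ▸ hlt 0).le
    obtain ⟨⟨hpos, -, -⟩, hd, -, -⟩ := hsol T ⟨hT0, hTT'⟩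
    have h1 : Tendsto A' (𝓝[<] T) (𝓝 (A' T)) := hd.continuousAt.tendsto.mono_left nhdsWithin_le_nhds
    have h2 : Tendsto A' (𝓝[<] T) (𝓝 0) := by
      refine ((F.tendsto_A hAB hBC).comp hgtop).congr' ?_
      filter_upwards [Ioo_mem_nhdsLT (hφ0 ▸ hlt 0)] with t ht
      exact (hext t ht.1.le (by exact_mod_cast ht.2)).1.symm
    exact hpos.ne' (tendsto_nhds_unique h1 h2)

/-! ### Symmetry in `A, B, C` -/

theorem IsSolSU2.swap_AB {A B C : ℝ → ℝ} {s : Set ℝ} (h : IsSolSU2 A B C s) :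
    IsSolSU2 B A C s := by
  intro t ht
  obtain ⟨⟨a, b, c⟩, hA, hB, hC⟩ := h t ht
  refine ⟨⟨b, a, c⟩, hB.congr_deriv ?_, hA.congr_deriv ?_, hC.congr_deriv ?_⟩ <;>
    simp only [su2X, su2Y, su2Z] <;> ring

theorem IsSolSU2.swap_BC {A B C : ℝ → ℝ} {s : Set ℝ} (h : IsSolSU2 A B C s) :
    IsSolSU2 A C B s := by
  intro t ht
  obtain ⟨⟨a, b, c⟩, hA, hB, hC⟩ := h t ht
  refine ⟨⟨a, c, b⟩, hA.congr_deriv ?_, hC.congr_deriv ?_, hB.congr_deriv ?_⟩ <;>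
    simp only [su2X, su2Y, su2Z] <;> ring

theorem ExtinctionStatement.swap_AB {A0 B0 C0 : ℝ} (h : ExtinctionStatement A0 B0 C0) :
    ExtinctionStatement B0 A0 C0 := by
  obtain ⟨T, A, B, C, hT, hA, hB, hC, ⟨hs, hm⟩, lA, lB, lC⟩ := h
  refine ⟨T, B, A, C, hT, hB, hA, hC, ⟨hs.swap_AB, fun A' B' C' T' hT' hs' he => ?_⟩, lB, lA, lC⟩
  exact hm B' A' C' T' hT' hs'.swap_AB
    fun t h0 ht => ⟨(he t h0 ht).2.1, (he t h0 ht).1, (he t h0 ht).2.2⟩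

theorem ExtinctionStatement.swap_BC {A0 B0 C0 : ℝ} (h : ExtinctionStatement A0 B0 C0) :
    ExtinctionStatement A0 C0 B0 := by
  obtain ⟨T, A, B, C, hT, hA, hB, hC, ⟨hs, hm⟩, lA, lB, lC⟩ := h
  refine ⟨T, A, C, B, hT, hA, hC, hB, ⟨hs.swap_BC, fun A' B' C' T' hT' hs' he => ?_⟩, lA, lC, lB⟩
  exact hm A' C' B' T' hT' hs'.swap_BC
    fun t h0 ht => ⟨(he t h0 ht).1, (he t h0 ht).2.2, (he t h0 ht).2.1⟩

/-- For any initial data `A0, B0, C0 > 0`, the `SU(2)` negative cross curvature flow has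
a maximal positive solution on a finite interval `[0, T0)`, and as `t → T0⁻` one has
`A, B, C ∼ 2√(T0 - t)`. -/
theorem su2_general_extinction
    (A0 B0 C0 : ℝ) (hA0 : 0 < A0) (hB0 : 0 < B0) (hC0 : 0 < C0) :
    ∃ (T0 : ℝ) (A B C : ℝ → ℝ), 0 < T0 ∧
      A 0 = A0 ∧ B 0 = B0 ∧ C 0 = C0 ∧
      IsMaxSolSU2 A B C (T0 : EReal) ∧
      Filter.Tendsto (fun t => A t / (2 * Real.sqrt (T0 - t)))
        (nhdsWithin T0 (Set.Iio T0)) (nhds 1) ∧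
      Filter.Tendsto (fun t => B t / (2 * Real.sqrt (T0 - t)))
        (nhdsWithin T0 (Set.Iio T0)) (nhds 1) ∧
      Filter.Tendsto (fun t => C t / (2 * Real.sqrt (T0 - t)))
        (nhdsWithin T0 (Set.Iio T0)) (nhds 1) := by
  change ExtinctionStatement A0 B0 C0
  rcases le_total B0 A0 with hBA | hAB <;> rcases le_total C0 B0 with hCB | hBC <;>
    rcases le_total C0 A0 with hCA | hAC
  · exact extinction_of_ordered hA0 hB0 hC0 hBA hCB
  · exact extinction_of_ordered hA0 hB0 hC0 hBA hCB
  · exact (extinction_of_ordered hA0 hC0 hB0 hCA hBC).swap_BC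
  · exact (extinction_of_ordered hC0 hA0 hB0 hAC hBA).swap_AB.swap_BC
  · exact (extinction_of_ordered hB0 hA0 hC0 hAB hCA).swap_AB
  · exact (extinction_of_ordered hB0 hC0 hA0 hCB hAC).swap_BC.swap_AB
  · exact (extinction_of_ordered hC0 hB0 hA0 hBC hAB).swap_AB.swap_BC.swap_AB
  · exact (extinction_of_ordered hC0 hB0 hA0 hBC hAB).swap_AB.swap_BC.swap_AB
end

section
/- Let A, B be positive differentiable functions of t with A(0) = A_0 > 0, B(0) = B_0 > 0 solving the reduced SL(2,ℝ) negative cross curvature flow system dA/dt = -2A^3/B^4, dB/dt = 2(3A^2 + 4AB)/B^3 (the case B = C). Then A is decreasing, B is increasing, the solution exists on all of [0, ∞), and for all t ≥ 0: A(t) ≥ (4 B_0^{-4} t + A_0^{-2})^{-1/2} and B(t) ≤ (C_1 t + B_0^3)^{1/3}, where C_1 = 24 A_0 + 18 A_0^2 B_0^{-1}. -/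
/-!
Along a solution `A' < 0` and `B' > 0`, so `A ≤ A 0` and `B ≥ B 0`. Hence `(A⁻²)' = 4 / B⁴` is at
most `4 / B₀⁴` and `(B³)' = 24 A + 18 A² / B` is at most `24 A₀ + 18 A₀² / B₀`; integrating gives
both estimates on the whole interval of existence (`IsSolSL2Red.bounds`).

If a maximal solution lived only up to a finite time `T`, these estimates would make the monotone
functions `A`, `B` converge to positive limits as `t → T⁻`. The Picard–Lindelöf theorem provides a
solution through that limit point at time `T`, and gluing it to `(A, B)` produces a strictly longer
solution (`IsSolSL2Red.exists_extension`), contradicting maximality. The glued functions are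
differentiable at `T` because their derivatives have matching one-sided limits there
(`hasDerivAt_glue`).
-/

/-- A pair of functions solves the reduced (`B = C`) `SL(2,ℝ)` negative cross curvature
flow system `A' = -2A³/B⁴`, `B' = 2(3A² + 4AB)/B³` (with positivity) on a set `s ⊆ ℝ`. -/
def IsSolSL2Red (A B : ℝ → ℝ) (s : Set ℝ) : Prop :=
  ∀ t ∈ s,
    (0 < A t ∧ 0 < B t) ∧
    HasDerivAt A (-2 * A t ^ 3 / B t ^ 4) t ∧
    HasDerivAt B (2 * (3 * A t ^ 2 + 4 * A t * B t) / B t ^ 3) t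

/-- A maximal solution of the reduced `SL(2,ℝ)` system on `{t | 0 ≤ t, t < T}`
(`T ∈ (0,∞]` an extended real): a solution admitting no extension to a strictly larger
interval. -/
def IsMaxSolSL2Red (A B : ℝ → ℝ) (T : EReal) : Prop :=
  IsSolSL2Red A B {t : ℝ | 0 ≤ t ∧ (t : EReal) < T} ∧
  ∀ (A' B' : ℝ → ℝ) (T' : EReal), T < T' →
    IsSolSL2Red A' B' {t : ℝ | 0 ≤ t ∧ (t : EReal) < T'} →
    ¬ (∀ t : ℝ, 0 ≤ t → (t : EReal) < T → A' t = A t ∧ B' t = B t)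

open Set Filter Topology

lemma image_le_add_mul_of_hasDerivAt {S : Set ℝ} (hS : Convex ℝ S) {f f' : ℝ → ℝ} {c : ℝ}
    (hf : ∀ t ∈ S, HasDerivAt f (f' t) t) (hc : ∀ t ∈ S, f' t ≤ c)
    (h0 : (0 : ℝ) ∈ S) {t : ℝ} (ht : t ∈ S) (ht0 : 0 ≤ t) : f t ≤ c * t + f 0 := by
  have h := hS.image_sub_le_mul_sub_of_deriv_le
    (fun x hx => (hf x hx).continuousAt.continuousWithinAt)
    (fun x hx => (hf x (interior_subset hx)).differentiableAt.differentiableWithinAt)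
    (C := c) (fun x hx => by
      rw [(hf x (interior_subset hx)).deriv]; exact hc x (interior_subset hx))
    0 h0 t ht ht0
  linarith

lemma IsSolSL2Red.strictAntiOn {A B : ℝ → ℝ} {S : Set ℝ} (hS : Convex ℝ S)
    (h : IsSolSL2Red A B S) : StrictAntiOn A S := by
  refine strictAntiOn_of_deriv_neg hS
    (fun x hx => (h x hx).2.1.continuousAt.continuousWithinAt) fun x hx => ?_
  obtain ⟨⟨hA, hB⟩, hdA, -⟩ := h x (interior_subset hx)
  rw [hdA.deriv]
  exact div_neg_of_neg_of_pos (by have := pow_pos hA 3; linarith) (by positivity)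

lemma IsSolSL2Red.strictMonoOn {A B : ℝ → ℝ} {S : Set ℝ} (hS : Convex ℝ S)
    (h : IsSolSL2Red A B S) : StrictMonoOn B S := by
  refine strictMonoOn_of_deriv_pos hS
    (fun x hx => (h x hx).2.2.continuousAt.continuousWithinAt) fun x hx => ?_
  obtain ⟨⟨hA, hB⟩, -, hdB⟩ := h x (interior_subset hx)
  rw [hdB.deriv]
  positivity

/-- The two growth estimates, in polynomial form: bounds for the derivatives of `A⁻²` and `B³`, integrated. -/
lemma IsSolSL2Red.bounds {A B : ℝ → ℝ} {S : Set ℝ} (hS : Convex ℝ S)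
    (h : IsSolSL2Red A B S) (h0 : (0 : ℝ) ∈ S) (hnn : ∀ t ∈ S, 0 ≤ t) {t : ℝ} (ht : t ∈ S) :
    1 / A t ^ 2 ≤ 4 / B 0 ^ 4 * t + 1 / A 0 ^ 2 ∧
      B t ^ 3 ≤ (24 * A 0 + 18 * A 0 ^ 2 / B 0) * t + B 0 ^ 3 := by
  have hAle : ∀ s ∈ S, A s ≤ A 0 := fun s hs =>
    (h.strictAntiOn hS).antitoneOn h0 hs (hnn s hs)
  have hBle : ∀ s ∈ S, B 0 ≤ B s := fun s hs =>
    (h.strictMonoOn hS).monotoneOn h0 hs (hnn s hs)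
  obtain ⟨⟨hA0, hB0⟩, -, -⟩ := h 0 h0
  constructor
  · refine image_le_add_mul_of_hasDerivAt (f := fun s => 1 / A s ^ 2) (f' := fun s => 4 / B s ^ 4)
      hS (fun s hs => ?_) (fun s hs => ?_) h0 ht (hnn t ht)
    · obtain ⟨⟨hA, hB⟩, hdA, -⟩ := h s hs
      have := (hdA.fun_pow 2).fun_inv (by positivity)
      simp only [one_div]
      refine this.congr_deriv ?_
      field_simp
      norm_num
      ring
    · have := hBle s hs
      gcongr
  · refine image_le_add_mul_of_hasDerivAt (f := fun s => B s ^ 3)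
      (f' := fun s => 24 * A s + 18 * A s ^ 2 / B s)
      hS (fun s hs => ?_) (fun s hs => ?_) h0 ht (hnn t ht)
    · obtain ⟨⟨hA, hB⟩, -, hdB⟩ := h s hs
      refine (hdB.fun_pow 3).congr_deriv ?_
      field_simp
      norm_num
      ring
    · have h1 := hBle s hs
      have h2 := hAle s hs
      have h3 := (h s hs).1.1
      gcongr

lemma hasDerivAt_glue {f g f' : ℝ → ℝ} {a T e : ℝ} (ha : a < T)
    (hf : ∀ t ∈ Ioo a T, HasDerivAt f (f' t) t) (hl : Tendsto f (𝓝[<] T) (𝓝 (g T)))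
    (hl' : Tendsto f' (𝓝[<] T) (𝓝 e)) (hg : HasDerivAt g e T) :
    HasDerivAt (fun t => if t < T then f t else g t) e T := by
  set F : ℝ → ℝ := fun t => if t < T then f t else g t with hF
  have hFT : F T = g T := by simp [hF]
  have hFd : ∀ t ∈ Ioo a T, HasDerivAt F (f' t) t := fun t ht =>
    (hf t ht).congr_of_eventuallyEq (by
      filter_upwards [Iio_mem_nhds ht.2] with s hs
      exact if_pos hs)
  have hmem : Ioo a T ∈ 𝓝[<] T := Ioo_mem_nhdsLT ha
  have hleft : HasDerivWithinAt F e (Iic T) T := by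
    refine hasDerivWithinAt_Iic_of_tendsto_deriv (s := Ioo a T)
      (fun t ht => (hFd t ht).differentiableAt.differentiableWithinAt) ?_ hmem ?_
    · have : Tendsto F (𝓝[<] T) (𝓝 (F T)) := by
        rw [hFT]
        refine hl.congr' ?_
        filter_upwards [hmem] with s hs
        exact (if_pos hs.2).symm
      exact this.mono_left (nhdsWithin_mono _ fun s hs => hs.2)
    · refine hl'.congr' ?_
      filter_upwards [hmem] with s hs
      exact (hFd s hs).deriv.symm
  have hright : HasDerivWithinAt F e (Ici T) T :=
    hg.hasDerivWithinAt.congr (fun s hs => if_neg (not_lt.2 hs)) hFT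
  have := hleft.union hright
  rwa [Iic_union_Ici, hasDerivWithinAt_univ] at this

/-- Local existence for the reduced system with data prescribed at an arbitrary time `T`. -/
lemma exists_local_sol (T : ℝ) {a b : ℝ} (ha : 0 < a) (hb : 0 < b) :
    ∃ P Q : ℝ → ℝ, P T = a ∧ Q T = b ∧ ∃ ε > 0, IsSolSL2Red P Q (Ioo (T - ε) (T + ε)) := by
  let v : ℝ × ℝ → ℝ × ℝ := fun p =>
    (-2 * p.1 ^ 3 / p.2 ^ 4, 2 * (3 * p.1 ^ 2 + 4 * p.1 * p.2) / p.2 ^ 3)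
  have hv : ContDiffAt ℝ 1 v (a, b) := by
    refine ContDiffAt.prodMk (ContDiffAt.div (by fun_prop) (by fun_prop) ?_)
      (ContDiffAt.div (by fun_prop) (by fun_prop) ?_)
    · positivity
    · positivity
  obtain ⟨α, hα, ε, hε, hd⟩ :=
    hv.exists_forall_mem_closedBall_exists_eq_forall_mem_Ioo_hasDerivAt₀ T
  have hcont : ContinuousAt α T := (hd T ⟨by linarith, by linarith⟩).continuousAt
  have hpos : ∀ᶠ t in 𝓝 T, 0 < (α t).1 ∧ 0 < (α t).2 := by
    have h1 : ∀ᶠ t in 𝓝 T, 0 < (α t).1 :=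
      hcont.fst.eventually (lt_mem_nhds (by simpa [hα] using ha))
    have h2 : ∀ᶠ t in 𝓝 T, 0 < (α t).2 :=
      hcont.snd.eventually (lt_mem_nhds (by simpa [hα] using hb))
    exact h1.and h2
  obtain ⟨δ, hδ, hball⟩ := Metric.eventually_nhds_iff.1 hpos
  refine ⟨fun t => (α t).1, fun t => (α t).2, by simp [hα], by simp [hα],
    min ε δ, lt_min hε hδ, fun t ht => ?_⟩
  have hm1 := min_le_left ε δ
  have hm2 := min_le_right ε δ
  have hdt := hd t ⟨by linarith [ht.1], by linarith [ht.2]⟩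
  refine ⟨hball ?_, hdt.fst, hdt.snd⟩
  rw [Real.dist_eq, abs_lt]
  exact ⟨by linarith [ht.1], by linarith [ht.2]⟩

lemma IsSolSL2Red.exists_extension {A B : ℝ → ℝ} {T : ℝ} (hT : 0 < T)
    (h : IsSolSL2Red A B (Ico 0 T)) :
    ∃ A' B' : ℝ → ℝ, ∃ T' > T, IsSolSL2Red A' B' (Ico 0 T') ∧
      ∀ t < T, A' t = A t ∧ B' t = B t := by
  have h0 : (0 : ℝ) ∈ Ico 0 T := ⟨le_rfl, hT⟩
  have hS : Convex ℝ (Ico 0 T) := convex_Ico 0 T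
  have hsub : Ioo 0 T ⊆ Ico 0 T := Ioo_subset_Ico_self
  have hne : (Ioo 0 T).Nonempty := nonempty_Ioo.2 hT
  obtain ⟨⟨hA0, hB0⟩, -, -⟩ := h 0 h0
  have hbd := fun t (ht : t ∈ Ico 0 T) => h.bounds hS h0 (fun t ht => ht.1) ht
  have hmem : Ioo 0 T ∈ 𝓝[<] T := Ioo_mem_nhdsLT hT
  obtain ⟨m, hm, hAm⟩ : ∃ m > 0, ∀ t ∈ Ico 0 T, m ≤ A t := by
    set K := 4 / B 0 ^ 4 * T + 1 / A 0 ^ 2 with hK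
    have hKpos : 0 < K := by positivity
    refine ⟨1 / √K, by positivity, fun t ht => ?_⟩
    have hA := (h t ht).1.1
    have h1 : 1 / A t ^ 2 ≤ K := (hbd t ht).1.trans (by
      have := ht.2.le
      rw [hK]
      gcongr)
    rw [div_le_iff₀ (by positivity), ← div_le_iff₀' hA]
    refine Real.le_sqrt_of_sq_le ?_
    rwa [div_pow, one_pow]
  obtain ⟨M, hBM⟩ : ∃ M, ∀ t ∈ Ico 0 T, B t ≤ M := by
    set K := (24 * A 0 + 18 * A 0 ^ 2 / B 0) * T + B 0 ^ 3 with hK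
    have hKpos : 0 < K := by positivity
    refine ⟨K + 1, fun t ht => ?_⟩
    have hB := (h t ht).1.2
    have h1 : B t ^ 3 ≤ K := (hbd t ht).2.trans (by
      have := ht.2.le
      rw [hK]
      gcongr)
    by_contra! hlt
    have h2 : 1 ≤ B t := by linarith
    have h3 : B t ^ 1 ≤ B t ^ 3 := pow_le_pow_right₀ h2 (by norm_num)
    linarith
  obtain ⟨a, ha, hAa⟩ : ∃ a > 0, Tendsto A (𝓝[<] T) (𝓝 a) := by
    have hlim := AntitoneOn.tendsto_nhdsWithin_Ioo_left hne
      ((h.strictAntiOn hS).antitoneOn.mono hsub)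
      ⟨m, by rintro _ ⟨t, ht, rfl⟩; exact hAm t (hsub ht)⟩
    refine ⟨_, lt_of_lt_of_le hm (ge_of_tendsto hlim ?_), hlim⟩
    filter_upwards [hmem] with t ht
    exact hAm t (hsub ht)
  obtain ⟨b, hb, hBb⟩ : ∃ b > 0, Tendsto B (𝓝[<] T) (𝓝 b) := by
    have hlim := MonotoneOn.tendsto_nhdsWithin_Ioo_left hne
      ((h.strictMonoOn hS).monotoneOn.mono hsub)
      ⟨M, by rintro _ ⟨t, ht, rfl⟩; exact hBM t (hsub ht)⟩
    refine ⟨_, lt_of_lt_of_le hB0 (ge_of_tendsto hlim ?_), hlim⟩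
    filter_upwards [hmem] with t ht
    exact (h.strictMonoOn hS).monotoneOn h0 (hsub ht) ht.1.le
  obtain ⟨P, Q, hP, hQ, ε, hε, hPQ⟩ := exists_local_sol T ha hb
  obtain ⟨-, hdP, hdQ⟩ := hPQ T ⟨by linarith, by linarith⟩
  rw [hP, hQ] at hdP hdQ
  refine ⟨fun t => if t < T then A t else P t, fun t => if t < T then B t else Q t,
    T + ε, by linarith, fun t ht => ?_, fun t ht => ⟨if_pos ht, if_pos ht⟩⟩
  rcases lt_trichotomy t T with hlt | rfl | hgt
  · obtain ⟨hp, hdA, hdB⟩ := h t ⟨ht.1, hlt⟩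
    simp only [if_pos hlt]
    refine ⟨hp, hdA.congr_of_eventuallyEq ?_, hdB.congr_of_eventuallyEq ?_⟩ <;>
    · filter_upwards [Iio_mem_nhds hlt] with s hs
      exact if_pos hs
  · simp only [lt_irrefl, if_false, hP, hQ]
    refine ⟨⟨ha, hb⟩,
      hasDerivAt_glue hT (fun s hs => (h s (hsub hs)).2.1) (by rwa [hP]) ?_ hdP,
      hasDerivAt_glue hT (fun s hs => (h s (hsub hs)).2.2) (by rwa [hQ]) ?_ hdQ⟩
    · exact ((hAa.pow 3).const_mul (-2)).div (hBb.pow 4) (by positivity)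
    · exact ((((hAa.pow 2).const_mul 3).add ((hAa.const_mul 4).mul hBb)).const_mul 2).div
        (hBb.pow 3) (by positivity)
  · obtain ⟨hp, hdA, hdB⟩ := hPQ t ⟨by linarith, ht.2⟩
    simp only [if_neg hgt.not_gt]
    refine ⟨hp, hdA.congr_of_eventuallyEq ?_, hdB.congr_of_eventuallyEq ?_⟩ <;>
    · filter_upwards [Ioi_mem_nhds hgt] with s hs
      exact if_neg (not_lt.2 (le_of_lt hs))

/-- For the reduced (`B = C`) `SL(2,ℝ)` negative cross curvature flow with
`A(0) = A0 > 0`, `B(0) = B0 > 0`: `A` is decreasing, `B` is increasing, the (maximal)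
solution exists on all of `[0, ∞)`, and for all `t ≥ 0`,
`A(t) ≥ (4B0⁻⁴t + A0⁻²)^{-1/2}` and `B(t) ≤ (C1 t + B0³)^{1/3}` where
`C1 = 24A0 + 18A0²/B0`. -/
theorem sl2_reduced_global_existence
    (A0 B0 : ℝ) (hA0 : 0 < A0) (hB0 : 0 < B0)
    (A B : ℝ → ℝ) (T : EReal) (hT : 0 < T)
    (hmax : IsMaxSolSL2Red A B T)
    (hinitA : A 0 = A0) (hinitB : B 0 = B0)
    (C1 : ℝ) (hC1 : C1 = 24 * A0 + 18 * A0 ^ 2 / B0) :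
    T = ⊤ ∧
    StrictAntiOn A (Set.Ici (0 : ℝ)) ∧
    StrictMonoOn B (Set.Ici (0 : ℝ)) ∧
    ∀ t : ℝ, 0 ≤ t →
      A t ≥ (4 / B0 ^ 4 * t + 1 / A0 ^ 2) ^ (-(1 : ℝ) / 2) ∧
      B t ≤ (C1 * t + B0 ^ 3) ^ ((1 : ℝ) / 3) := by
  have hset : ∀ R : ℝ, {t : ℝ | 0 ≤ t ∧ (t : EReal) < (R : EReal)} = Ico 0 R := fun R => by
    ext t
    simp [EReal.coe_lt_coe_iff]
  have hTtop : T = ⊤ := by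
    induction T with
    | bot => exact absurd hT (by simp)
    | top => rfl
    | coe R =>
      exfalso
      obtain ⟨hsol, hno⟩ := hmax
      rw [hset] at hsol
      obtain ⟨A', B', R', hR, hext, hagree⟩ :=
        hsol.exists_extension (EReal.coe_pos.1 hT)
      exact hno A' B' R' (EReal.coe_lt_coe_iff.2 hR) (by rwa [hset])
        fun t _ ht => hagree t (EReal.coe_lt_coe_iff.1 ht)
  have hsol : IsSolSL2Red A B (Ici 0) := fun t ht =>
    hmax.1 t ⟨ht, by rw [hTtop]; exact EReal.coe_lt_top t⟩
  have hS : Convex ℝ (Ici (0 : ℝ)) := convex_Ici 0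
  refine ⟨hTtop, hsol.strictAntiOn hS, hsol.strictMonoOn hS, fun t ht => ?_⟩
  obtain ⟨hAt, hBt⟩ := hsol.bounds hS (mem_Ici.2 le_rfl) (fun _ hs => hs) (mem_Ici.2 ht)
  obtain ⟨⟨hA, hB⟩, -, -⟩ := hsol t ht
  rw [hinitA, hinitB] at hAt hBt
  rw [← hC1] at hBt
  constructor
  · have hmono := Real.rpow_le_rpow_of_nonpos (z := -(1 : ℝ) / 2)
      (show 0 < 1 / A t ^ 2 by positivity) hAt (by norm_num)
    have hval : (1 / A t ^ 2) ^ (-(1 : ℝ) / 2) = A t := by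
      rw [one_div, ← Real.rpow_natCast, ← Real.rpow_neg hA.le, ← Real.rpow_mul hA.le]
      norm_num
    rwa [hval] at hmono
  · have hmono := Real.rpow_le_rpow (z := (1 : ℝ) / 3) (by positivity) hBt (by norm_num)
    have hval : (B t ^ 3) ^ ((1 : ℝ) / 3) = B t := by
      rw [← Real.rpow_natCast, ← Real.rpow_mul hB.le]
      norm_num
    rwa [hval] at hmono
end

section
/- Let A, B be a positive solution on [0, ∞) of the reduced SL(2,ℝ) system dA/dt = -2A^3/B^4, dB/dt = 2(3A^2 + 4AB)/B^3 with A_0, B_0 > 0. Then d(4A^{-1} + B^{-1})/dt = -6A^2/B^5 and d(A^9 B^3)/dt = 24 A^{10} along the solution; consequently A(t) decreases to a positive limit A_∞ > 0, B(t) → ∞ as t → ∞, and as t → ∞ one has B(t)/(24 A_∞ t)^{1/3} → 1 and t^{1/3}(A(t) - A_∞) → A_∞^{5/3}/(8·3^{1/3}). -/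
open Filter Topology Set

/-- A continuous form of Cesàro's theorem: if `f'` tends to `L` at infinity, so does the
average growth rate `f t / t`. -/
lemma tendsto_div_of_tendsto_deriv {f f' : ℝ → ℝ} {L : ℝ}
    (hf : ∀ t, 0 ≤ t → HasDerivAt f (f' t) t) (hL : Tendsto f' atTop (𝓝 L)) :
    Tendsto (fun t => f t / t) atTop (𝓝 L) := by
  rw [Metric.tendsto_atTop] at hL ⊢
  intro ε hε
  obtain ⟨T₀, hT₀⟩ := hL (ε / 2) (by positivity)
  set T := max T₀ 1 with hT
  have hT1 : 1 ≤ T := le_max_right _ _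
  -- Beyond `2|f T - L T| / ε` the initial error `f T - L T` costs less than `ε / 2` on average.
  refine ⟨max T (2 * |f T - L * T| / ε), fun t ht => ?_⟩
  have htT : T ≤ t := (le_max_left _ _).trans ht
  have ht2 : 2 * |f T - L * T| / ε ≤ t := (le_max_right _ _).trans ht
  have htpos : 0 < t := by linarith
  have hmv : ‖(f t - L * t) - (f T - L * T)‖ ≤ ε / 2 * (t - T) := by
    refine norm_image_sub_le_of_norm_deriv_le_segment' (f := fun s => f s - L * s)
      (f' := fun s => f' s - L) (C := ε / 2) (fun x hx => ?_) (fun x hx => ?_) t ⟨htT, le_rfl⟩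
    · have h := (hf x (by linarith [hx.1])).fun_sub ((hasDerivAt_id x).const_mul L)
      simpa using h.hasDerivWithinAt
    · have h := hT₀ x ((le_max_left _ _).trans hx.1)
      rw [Real.dist_eq] at h
      exact h.le
  rw [Real.norm_eq_abs] at hmv
  have h2 : 2 * |f T - L * T| ≤ t * ε := (div_le_iff₀ hε).1 ht2
  have htri : |f t - L * t| ≤ |(f t - L * t) - (f T - L * T)| + |f T - L * T| := by
    have := abs_add_le ((f t - L * t) - (f T - L * T)) (f T - L * T)
    simpa using this
  have hεT : 0 < ε * T := by positivity
  rw [Real.dist_eq, show f t / t - L = (f t - L * t) / t by field_simp, abs_div, abs_of_pos htpos,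
    div_lt_iff₀ htpos]
  linarith

/-- For a positive global solution of the reduced (`B = C`) `SL(2,ℝ)` negative cross
curvature flow: `d(4A⁻¹ + B⁻¹)/dt = -6A²/B⁵` and `d(A⁹B³)/dt = 24A¹⁰`; consequently
`A` decreases to a positive limit `A∞ > 0`, `B → ∞`, and as `t → ∞`,
`B ∼ (24A∞t)^{1/3}` and `A ∼ A∞ + (1/(8·3^{1/3}))A∞^{5/3} t^{-1/3}`. -/
theorem sl2_reduced_asymptotics
    (A0 B0 : ℝ) (hA0 : 0 < A0) (hB0 : 0 < B0)
    (A B : ℝ → ℝ)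
    (hsol : IsSolSL2Red A B (Set.Ici (0 : ℝ)))
    (hinitA : A 0 = A0) (hinitB : B 0 = B0) :
    (∀ t ∈ Set.Ici (0 : ℝ),
      HasDerivAt (fun s => 4 / A s + 1 / B s) (-6 * A t ^ 2 / B t ^ 5) t ∧
      HasDerivAt (fun s => A s ^ 9 * B s ^ 3) (24 * A t ^ 10) t) ∧
    ∃ Ainf : ℝ, 0 < Ainf ∧
      AntitoneOn A (Set.Ici (0 : ℝ)) ∧
      Filter.Tendsto A Filter.atTop (nhds Ainf) ∧
      Filter.Tendsto B Filter.atTop Filter.atTop ∧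
      Filter.Tendsto (fun t : ℝ => B t / (24 * Ainf * t) ^ ((1 : ℝ) / 3))
        Filter.atTop (nhds 1) ∧
      Filter.Tendsto (fun t : ℝ => t ^ ((1 : ℝ) / 3) * (A t - Ainf))
        Filter.atTop (nhds (Ainf ^ ((5 : ℝ) / 3) / (8 * (3 : ℝ) ^ ((1 : ℝ) / 3)))) := by
  have hA : ∀ t, 0 ≤ t → 0 < A t := fun t ht => (hsol t ht).1.1
  have hB : ∀ t, 0 ≤ t → 0 < B t := fun t ht => (hsol t ht).1.2
  have hA' : ∀ t, 0 ≤ t → HasDerivAt A (-2 * A t ^ 3 / B t ^ 4) t :=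
    fun t ht => (hsol t ht).2.1
  have hB' : ∀ t, 0 ≤ t → HasDerivAt B (2 * (3 * A t ^ 2 + 4 * A t * B t) / B t ^ 3) t :=
    fun t ht => (hsol t ht).2.2
  have hBinv : ∀ t, 0 ≤ t → HasDerivAt (fun s => 1 / B s)
      (-(6 * A t ^ 2 + 8 * A t * B t) / B t ^ 5) t := by
    intro t ht
    have hb := (hB t ht).ne'
    have h := (hB' t ht).fun_inv hb
    simp only [one_div]
    refine h.congr_deriv ?_
    field_simp
    ring
  have hE : ∀ t, 0 ≤ t →
      HasDerivAt (fun s => 4 / A s + 1 / B s) (-6 * A t ^ 2 / B t ^ 5) t := by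
    intro t ht
    have ha := (hA t ht).ne'
    have hb := (hB t ht).ne'
    have h := (((hA' t ht).fun_inv ha).const_mul 4).fun_add (hBinv t ht)
    simp only [div_eq_mul_inv (4 : ℝ)]
    refine h.congr_deriv ?_
    field_simp
    ring
  have hF : ∀ t, 0 ≤ t → HasDerivAt (fun s => A s ^ 9 * B s ^ 3) (24 * A t ^ 10) t := by
    intro t ht
    have hb := (hB t ht).ne'
    have h := ((hA' t ht).fun_pow 9).fun_mul ((hB' t ht).fun_pow 3)
    refine h.congr_deriv ?_
    field_simp
    push_cast
    ring
  refine ⟨fun t ht => ⟨hE t ht, hF t ht⟩, ?_⟩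
  have hanti : AntitoneOn A (Ici (0 : ℝ)) := by
    refine antitoneOn_of_hasDerivWithinAt_nonpos (f' := fun t => -2 * A t ^ 3 / B t ^ 4)
      (convex_Ici 0)
      (fun t ht => (hA' t ht).continuousAt.continuousWithinAt)
      (fun t ht => (hA' t (interior_subset ht)).hasDerivWithinAt) (fun t ht => ?_)
    have ha := hA t (interior_subset ht)
    have hb := hB t (interior_subset ht)
    have : 0 ≤ 2 * A t ^ 3 / B t ^ 4 := by positivity
    calc -2 * A t ^ 3 / B t ^ 4 = -(2 * A t ^ 3 / B t ^ 4) := by ring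
      _ ≤ 0 := by linarith
  have hEanti : AntitoneOn (fun s => 4 / A s + 1 / B s) (Ici (0 : ℝ)) := by
    refine antitoneOn_of_hasDerivWithinAt_nonpos (f' := fun t => -6 * A t ^ 2 / B t ^ 5)
      (convex_Ici 0)
      (fun t ht => (hE t ht).continuousAt.continuousWithinAt)
      (fun t ht => (hE t (interior_subset ht)).hasDerivWithinAt) (fun t ht => ?_)
    have hb := hB t (interior_subset ht)
    have : 0 ≤ 6 * A t ^ 2 / B t ^ 5 := by positivity
    calc -6 * A t ^ 2 / B t ^ 5 = -(6 * A t ^ 2 / B t ^ 5) := by ring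
      _ ≤ 0 := by linarith
  set K := 4 / A 0 + 1 / B 0 with hK
  have hKpos : 0 < K := by
    have ha := hA 0 le_rfl
    have hb := hB 0 le_rfl
    positivity
  have hAlow : ∀ t, 0 ≤ t → 4 / K ≤ A t := by
    intro t ht
    have ha := hA t ht
    have hb : 0 < 1 / B t := one_div_pos.2 (hB t ht)
    have h : 4 / A t + 1 / B t ≤ K := hEanti (mem_Ici.2 le_rfl) (mem_Ici.2 ht) ht
    rw [div_le_iff₀ hKpos, mul_comm]
    exact (div_le_iff₀ ha).1 (by linarith)
  -- Precomposing with `max · 0` turns `A` into a function that is antitone on the whole line.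
  obtain ⟨Ainf, hlim⟩ : ∃ Ainf, Tendsto A atTop (𝓝 Ainf) := by
    have hanti' : Antitone (fun t => A (max t 0)) := fun s t hst =>
      hanti (mem_Ici.2 (le_max_right _ _)) (mem_Ici.2 (le_max_right _ _))
        (max_le_max hst le_rfl)
    have hbdd : BddBelow (range fun t => A (max t 0)) :=
      ⟨4 / K, by rintro _ ⟨t, rfl⟩; exact hAlow _ (le_max_right _ _)⟩
    refine ⟨_, (tendsto_atTop_ciInf hanti' hbdd).congr' ?_⟩
    filter_upwards [eventually_ge_atTop 0] with t ht
    rw [max_eq_left ht]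
  have hpos : 0 < Ainf := lt_of_lt_of_le (by positivity : (0 : ℝ) < 4 / K)
    (ge_of_tendsto hlim ((eventually_ge_atTop 0).mono hAlow))
  have hB3 : Tendsto (fun t => B t ^ 3 / t) atTop (𝓝 (24 * Ainf)) := by
    have h := (tendsto_div_of_tendsto_deriv hF ((hlim.pow 10).const_mul 24)).div
      (hlim.pow 9) (by positivity)
    rw [show 24 * Ainf ^ 10 / Ainf ^ 9 = 24 * Ainf by field_simp] at h
    refine h.congr' ?_
    filter_upwards [eventually_ge_atTop 0] with t ht
    have ha := (hA t ht).ne'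
    simp only [Pi.div_apply]
    field_simp
  have hBt : Tendsto (fun t => B t / t ^ ((1 : ℝ) / 3)) atTop
      (𝓝 ((24 * Ainf) ^ ((1 : ℝ) / 3))) := by
    refine (hB3.rpow_const (p := (1 : ℝ) / 3) (Or.inr (by norm_num))).congr' ?_
    filter_upwards [eventually_gt_atTop 0] with t ht
    have hb := hB t ht.le
    rw [Real.div_rpow (by positivity) ht.le, ← Real.rpow_natCast, ← Real.rpow_mul hb.le]
    norm_num
  have hcpos : 0 < (24 * Ainf) ^ ((1 : ℝ) / 3) := by positivity
  have hBtop : Tendsto B atTop atTop := by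
    refine (hBt.pos_mul_atTop hcpos
      (tendsto_rpow_atTop (by norm_num : (0 : ℝ) < 1 / 3))).congr' ?_
    filter_upwards [eventually_gt_atTop 0] with t ht
    have : 0 < t ^ ((1 : ℝ) / 3) := by positivity
    field_simp
  have hBinv0 : Tendsto (fun t => 1 / B t) atTop (𝓝 0) := by
    simp only [one_div]
    exact hBtop.inv_tendsto_atTop
  have hquot : Tendsto (fun t => (A t - Ainf) / (1 / B t)) atTop (𝓝 (Ainf ^ 2 / 4)) := by
    refine HasDerivAt.lhopital_zero_atTop (f' := fun t => -2 * A t ^ 3 / B t ^ 4)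
      (g' := fun t => -(6 * A t ^ 2 + 8 * A t * B t) / B t ^ 5) ?_ ?_ ?_ ?_ hBinv0 ?_
    · filter_upwards [eventually_ge_atTop 0] with t ht using (hA' t ht).sub_const Ainf
    · filter_upwards [eventually_ge_atTop 0] with t ht using hBinv t ht
    · filter_upwards [eventually_ge_atTop 0] with t ht
      have ha := hA t ht
      have hb := hB t ht
      exact div_ne_zero (neg_ne_zero.2 (by positivity)) (by positivity)
    · simpa using hlim.sub_const Ainf
    · -- The quotient of derivatives equals `2A² / (6A · (1/B) + 8)`.
      have h : Tendsto (fun t => 2 * A t ^ 2 / (6 * A t * (1 / B t) + 8)) atTop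
          (𝓝 (2 * Ainf ^ 2 / (6 * Ainf * 0 + 8))) :=
        ((hlim.pow 2).const_mul 2).div (((hlim.const_mul 6).mul hBinv0).add_const 8)
          (by norm_num)
      rw [show 2 * Ainf ^ 2 / (6 * Ainf * 0 + 8) = Ainf ^ 2 / 4 by ring] at h
      refine h.congr' ?_
      filter_upwards [eventually_ge_atTop 0] with t ht
      have ha := hA t ht
      have hb := hB t ht
      have h1 : 6 * A t + 8 * B t ≠ 0 := by positivity
      rw [show -(6 * A t ^ 2 + 8 * A t * B t) = -(A t * (6 * A t + 8 * B t)) by ring,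
        show 6 * A t * (1 / B t) + 8 = (6 * A t + 8 * B t) / B t by field_simp]
      field_simp
  refine ⟨Ainf, hpos, hanti, hlim, hBtop, ?_, ?_⟩
  · have h := hBt.div_const ((24 * Ainf) ^ ((1 : ℝ) / 3))
    rw [div_self hcpos.ne'] at h
    refine h.congr' ?_
    filter_upwards [eventually_gt_atTop 0] with t ht
    rw [Real.mul_rpow (by positivity) ht.le, div_div, mul_comm]
  · have h := hquot.div hBt hcpos.ne'
    have hval : Ainf ^ 2 / 4 / (24 * Ainf) ^ ((1 : ℝ) / 3)
        = Ainf ^ ((5 : ℝ) / 3) / (8 * (3 : ℝ) ^ ((1 : ℝ) / 3)) := by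
      have h8 : (8 : ℝ) ^ ((1 : ℝ) / 3) = 2 := by
        rw [show (8 : ℝ) = 2 ^ (3 : ℝ) by norm_num, ← Real.rpow_mul (by norm_num)]
        norm_num
      have hsplit : Ainf ^ 2 = Ainf ^ ((5 : ℝ) / 3) * Ainf ^ ((1 : ℝ) / 3) := by
        rw [← Real.rpow_add hpos, ← Real.rpow_natCast]
        norm_num
      have h3 : 0 < (3 : ℝ) ^ ((1 : ℝ) / 3) := by positivity
      have hA3 : 0 < Ainf ^ ((1 : ℝ) / 3) := by positivity
      rw [show (24 : ℝ) * Ainf = 8 * 3 * Ainf by ring, Real.mul_rpow (by norm_num) hpos.le,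
        Real.mul_rpow (by norm_num) (by norm_num), h8, hsplit]
      field_simp
      norm_num
    rw [hval] at h
    refine h.congr' ?_
    filter_upwards [eventually_gt_atTop 0] with t ht
    have hb := (hB t ht.le).ne'
    have : 0 < t ^ ((1 : ℝ) / 3) := by positivity
    simp only [Pi.div_apply]
    field_simp
end
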